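/- arXiv:2409.03594 — 10 statements merged into one kernel-verified Lean document; each statement's English description precedes it below -/
import Mathlib

section
/- In every goods instance, every orientation is an EFX^+ allocation. In particular, for any goods instance an EFX^+ orientation (and hence an EFX^+ allocation) always exists. -/
open Finset

variable {V : Type*} [DecidableEq V]

/-- `e` has strictly positive marginal value (is a *good*) for the valuation `v`
relative to the item set `M`. -/
def IsGoodFor (v : Finset (Sym2 V) → ℝ) (M : Finset (Sym2 V)) (e : Sym2 V) : Prop :=
  ∀ S ⊆ M.erase e, v S < v (insert e S)

/-- `e` has strictly negative marginal value (is a *chore*) for the valuation `v`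
relative to the item set `M`. -/
def IsChoreFor (v : Finset (Sym2 V) → ℝ) (M : Finset (Sym2 V)) (e : Sym2 V) : Prop :=
  ∀ S ⊆ M.erase e, v (insert e S) < v S

/-- `e` has zero marginal value (is a *dummy*) for the valuation `v`
relative to the item set `M`. -/
def IsDummyFor (v : Finset (Sym2 V) → ℝ) (M : Finset (Sym2 V)) (e : Sym2 V) : Prop :=
  ∀ S ⊆ M.erase e, v (insert e S) = v S

/-- A valid instance on a simple graph: the edge set `M` consists of non-loop edges,
every edge is (for every agent) a good, a chore, or a dummy, and every edge not
incident to an agent is a dummy for that agent. -/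
def ValidInstance (M : Finset (Sym2 V)) (v : V → Finset (Sym2 V) → ℝ) : Prop :=
  (∀ e ∈ M, ¬ e.IsDiag) ∧
  (∀ (i : V), ∀ e ∈ M, IsGoodFor (v i) M e ∨ IsChoreFor (v i) M e ∨ IsDummyFor (v i) M e) ∧
  (∀ (i : V), ∀ e ∈ M, i ∉ e → IsDummyFor (v i) M e)

/-- `X` is a (complete) allocation of the items in `M`: bundles are contained in `M`
and every item belongs to exactly one bundle. -/
def IsAllocation (M : Finset (Sym2 V)) (X : V → Finset (Sym2 V)) : Prop :=
  (∀ i, X i ⊆ M) ∧ ∀ e ∈ M, ∃! i, e ∈ X i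

/-- Every allocated edge goes to one of its endpoint agents. -/
def IsOrientation (X : V → Finset (Sym2 V)) : Prop :=
  ∀ i, ∀ e ∈ X i, i ∈ e

/-- Agent `i` envies agent `j`. -/
def Envies (v : V → Finset (Sym2 V) → ℝ) (X : V → Finset (Sym2 V)) (i j : V) : Prop :=
  v i (X i) < v i (X j)

/-- EFX condition on the envied bundle, removing an item whose removal *strictly*
decreases the value (superscript `+`). -/
def CondEnviedStrict (v : V → Finset (Sym2 V) → ℝ) (X : V → Finset (Sym2 V)) : Prop :=
  ∀ i j, Envies v X i j → ∀ e ∈ X j,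
    v i ((X j).erase e) < v i (X j) → v i ((X j).erase e) ≤ v i (X i)

/-- EFX condition on the envied bundle, removing an item whose removal weakly
decreases the value (superscript `0`). -/
def CondEnviedWeak (v : V → Finset (Sym2 V) → ℝ) (X : V → Finset (Sym2 V)) : Prop :=
  ∀ i j, Envies v X i j → ∀ e ∈ X j,
    v i ((X j).erase e) ≤ v i (X j) → v i ((X j).erase e) ≤ v i (X i)

/-- EFX condition on the envious agent's own bundle, removing an item whose removal
*strictly* increases the value (subscript `-`). -/
def CondOwnStrict (v : V → Finset (Sym2 V) → ℝ) (X : V → Finset (Sym2 V)) : Prop :=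
  ∀ i j, Envies v X i j → ∀ e ∈ X i,
    v i (X i) < v i ((X i).erase e) → v i (X j) ≤ v i ((X i).erase e)

/-- EFX condition on the envious agent's own bundle, removing an item whose removal
weakly increases the value (subscript `0`). -/
def CondOwnWeak (v : V → Finset (Sym2 V) → ℝ) (X : V → Finset (Sym2 V)) : Prop :=
  ∀ i j, Envies v X i j → ∀ e ∈ X i,
    v i (X i) ≤ v i ((X i).erase e) → v i (X j) ≤ v i ((X i).erase e)

/-- EFX⁺ for goods instances: only the condition on the envied bundle. -/
def EFXplusGoods (v : V → Finset (Sym2 V) → ℝ) (X : V → Finset (Sym2 V)) : Prop :=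
  CondEnviedStrict v X

theorem value_of_dummies {W : Type*} [DecidableEq W] (w : Finset (Sym2 W) → ℝ)
    (M S : Finset (Sym2 W)) (hS : S ⊆ M) (hd : ∀ e ∈ S, IsDummyFor w M e) : w S = w ∅ := by
  induction S using Finset.induction_on with
  | empty => rfl
  | insert a T ha ih =>
    have hT : T ⊆ M := fun x hx => hS (Finset.mem_insert_of_mem hx)
    rw [hd a (Finset.mem_insert_self a T) T (Finset.subset_erase.2 ⟨hT, ha⟩)]
    exact ih hT (fun e he => hd e (Finset.mem_insert_of_mem he))

theorem value_nonneg_of_goods {W : Type*} [DecidableEq W] (w : Finset (Sym2 W) → ℝ)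
    (M S : Finset (Sym2 W)) (hS : S ⊆ M)
    (hd : ∀ e ∈ M, IsGoodFor w M e ∨ IsDummyFor w M e) : w ∅ ≤ w S := by
  induction S using Finset.induction_on with
  | empty => exact le_rfl
  | insert a T ha ih =>
    have hT : T ⊆ M := fun x hx => hS (Finset.mem_insert_of_mem hx)
    have hTe : T ⊆ M.erase a := Finset.subset_erase.2 ⟨hT, ha⟩
    refine (ih hT).trans ?_
    rcases hd a (hS (Finset.mem_insert_self a T)) with h | h
    · exact (h T hTe).le
    · exact (h T hTe).ge

/-- In every goods instance, every orientation is an EFX⁺ allocation;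
in particular an EFX⁺ orientation (hence an EFX⁺ allocation) always exists. -/
theorem stmt0 {V : Type*} [DecidableEq V]
    (M : Finset (Sym2 V)) (v : V → Finset (Sym2 V) → ℝ)
    (hvalid : ValidInstance M v)
    (hgoods : ∀ (i : V), ∀ e ∈ M, IsGoodFor (v i) M e ∨ IsDummyFor (v i) M e) :
    (∀ X : V → Finset (Sym2 V),
        IsAllocation M X → IsOrientation X → EFXplusGoods v X) ∧
    (∃ X : V → Finset (Sym2 V),
        IsAllocation M X ∧ IsOrientation X ∧ EFXplusGoods v X) := by
  have main : ∀ X : V → Finset (Sym2 V),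
      IsAllocation M X → IsOrientation X → EFXplusGoods v X := by
    intro X hX hO i j hij e he hlt
    have hne : i ≠ j := by
      rintro rfl
      exact lt_irrefl _ hij
    have heM : e ∈ M := hX.1 j he
    have hie : i ∈ e := by
      by_contra hie
      have h := hvalid.2.2 i e heM hie ((X j).erase e) (Finset.erase_subset_erase e (hX.1 j))
      rw [Finset.insert_erase he] at h
      exact hlt.ne h.symm
    have hje : j ∈ e := hO j e he
    have hsub : (X j).erase e ⊆ M := (Finset.erase_subset _ _).trans (hX.1 j)
    have h0 : v i ((X j).erase e) = v i ∅ := by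
      refine value_of_dummies (v i) M _ hsub ?_
      intro f hf
      refine hvalid.2.2 i f (hsub hf) ?_
      intro hif
      have hjf : j ∈ f := hO j f (Finset.mem_of_mem_erase hf)
      apply Finset.ne_of_mem_erase hf
      rw [(Sym2.mem_and_mem_iff hne).1 ⟨hif, hjf⟩, (Sym2.mem_and_mem_iff hne).1 ⟨hie, hje⟩]
    rw [h0]
    exact value_nonneg_of_goods (v i) M (X i) (hX.1 i) (hgoods i)
  refine ⟨main, ?_⟩
  have hA : IsAllocation M (fun i => M.filter (fun e => (Quot.out e).1 = i)) := by
    refine ⟨fun i => Finset.filter_subset _ _, fun e he => ⟨(Quot.out e).1, ?_, ?_⟩⟩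
    · simp [he]
    · intro y hy
      exact (Finset.mem_filter.1 hy).2.symm
  have hO : IsOrientation (fun i => M.filter (fun e => (Quot.out e).1 = i)) := by
    intro i e he
    have h := (Finset.mem_filter.1 he).2
    rw [← h]
    exact Sym2.out_fst_mem e
  exact ⟨_, hA, hO, main _ hA hO⟩
end

section
/- Let G = (N, M) be a connected simple graph with strictly more edges than vertices, in an instance where every edge is a chore for both of its endpoint agents. Then no orientation of G is EFX^+_-; consequently no orientation satisfies any of the four notions EFX^0_0, EFX^0_-, EFX^+_0, EFX^+_- (each of which implies EFX^+_-), and no orientation is EFX_- or EFX_0. -/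
open Finset

variable {V : Type*} [DecidableEq V]

theorem aux_dummy {V : Type*} [DecidableEq V] (M : Finset (Sym2 V))
    (v : Finset (Sym2 V) → ℝ) (S : Finset (Sym2 V)) (hS : S ⊆ M)
    (h : ∀ e ∈ S, IsDummyFor v M e) : v S = v ∅ := by
  induction S using Finset.induction_on with
  | empty => rfl
  | insert a T ha ih =>
    rw [h a (by simp) T (by
      intro x hx
      rw [Finset.mem_erase]
      exact ⟨fun hxa => ha (hxa ▸ hx), hS (by simp [hx])⟩)]
    exact ih (fun x hx => hS (by simp [hx])) (fun e he => h e (by simp [he]))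

theorem aux_chore {V : Type*} [DecidableEq V] (M : Finset (Sym2 V))
    (v : Finset (Sym2 V) → ℝ) (S : Finset (Sym2 V)) (hS : S ⊆ M)
    (h : ∀ e ∈ S, IsChoreFor v M e) : v S ≤ v ∅ ∧ (S.Nonempty → v S < v ∅) := by
  induction S using Finset.induction_on with
  | empty => simp
  | insert a T ha ih =>
    have h1 := h a (by simp) T (by
      intro x hx
      rw [Finset.mem_erase]
      exact ⟨fun hxa => ha (hxa ▸ hx), hS (by simp [hx])⟩)
    have h2 := (ih (fun x hx => hS (by simp [hx])) (fun e he => h e (by simp [he]))).1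
    exact ⟨by linarith, fun _ => by linarith⟩

/-- On a connected simple graph with strictly more edges than
vertices, in an instance where every edge is a chore for both of its endpoints,
no orientation is EFX⁺₋; consequently no orientation satisfies EFX⁰₀, EFX⁰₋,
EFX⁺₀ or EFX⁺₋, and no orientation is EFX₋ or EFX₀. -/
theorem stmt2 {V : Type*} [Fintype V] [DecidableEq V]
    (G : SimpleGraph V) [DecidableRel G.Adj]
    (hconn : G.Connected)
    (hcount : Fintype.card V < G.edgeFinset.card)
    (v : V → Finset (Sym2 V) → ℝ)
    (hvalid : ValidInstance G.edgeFinset v)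
    (hchore : ∀ e ∈ G.edgeFinset, ∀ i ∈ e, IsChoreFor (v i) G.edgeFinset e) :
    ∀ X : V → Finset (Sym2 V),
      IsAllocation G.edgeFinset X → IsOrientation X →
        ¬ (CondEnviedStrict v X ∧ CondOwnStrict v X) ∧
        ¬ (CondEnviedWeak v X ∧ CondOwnWeak v X) ∧
        ¬ (CondEnviedWeak v X ∧ CondOwnStrict v X) ∧
        ¬ (CondEnviedStrict v X ∧ CondOwnWeak v X) ∧
        ¬ CondOwnStrict v X ∧
        ¬ CondOwnWeak v X := by
  intro X hX hO
  have key : ¬ CondOwnStrict v X := by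
    intro hC
    obtain ⟨hsub, huniq⟩ := hX
    -- some agent receives two edges
    obtain ⟨i, e, he, f, hf, hef⟩ : ∃ i, ∃ e ∈ X i, ∃ f ∈ X i, e ≠ f := by
      have hne : Nonempty V := hconn.nonempty
      choose! g hg using fun e he => (huniq e he).exists
      obtain ⟨e, he, f, hf, hne, hgf⟩ := Finset.exists_ne_map_eq_of_card_lt_of_maps_to
        (s := G.edgeFinset) (t := (Finset.univ : Finset V)) (f := g)
        (by simpa using hcount) (fun _ _ => by simp)
      exact ⟨g e, e, hg e he, f, hgf ▸ hg f hf, hne⟩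
    obtain ⟨j, hj⟩ := Sym2.mem_iff_exists.mp (hO i e he)
    have heM := hsub i he
    have hij : i ≠ j := by
      intro h
      apply hvalid.1 e heM
      rw [hj, h]
      simp
    -- `j` holds no edge incident to `i`
    have hj0 : v i (X j) = v i ∅ := by
      apply aux_dummy G.edgeFinset (v i) (X j) (hsub j)
      intro d hd
      refine hvalid.2.2 i d (hsub j hd) (fun hid => ?_)
      have hde : d = e := by
        rw [hj]
        exact (Sym2.mem_and_mem_iff hij).mp ⟨hid, hO j d hd⟩
      subst hde
      exact hij ((huniq d heM).unique he hd)
    have hall : ∀ d ∈ X i, IsChoreFor (v i) G.edgeFinset d :=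
      fun d hd => hchore d (hsub i hd) i (hO i d hd)
    have h1 : v i ((X i).erase e) < v i ∅ :=
      (aux_chore G.edgeFinset (v i) ((X i).erase e)
        ((Finset.erase_subset _ _).trans (hsub i))
        (fun d hd => hall d (Finset.mem_of_mem_erase hd))).2
        ⟨f, Finset.mem_erase.mpr ⟨hef.symm, hf⟩⟩
    have h2 : v i (X i) < v i ((X i).erase e) := by
      have := hall e he ((X i).erase e) (Finset.erase_subset_erase _ (hsub i))
      rwa [Finset.insert_erase he] at this
    have h3 := hC i j (by unfold Envies; linarith) e he h2
    linarith
  have key2 : ¬ CondOwnWeak v X := fun h =>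
    key (fun i j hE e he hlt => h i j hE e he hlt.le)
  exact ⟨fun h => key h.2, fun h => key2 h.2, fun h => key h.2, fun h => key2 h.2, key, key2⟩
end

section
/- Consider a chores instance on a simple graph G = (N, M) in which every edge is a chore for both of its endpoint agents. Then an EFX_- orientation of G exists if and only if every connected component of G has at most as many edges as vertices. -/
open Finset

variable {V : Type*} [DecidableEq V]

lemma aux_le_empty {V : Type*} [DecidableEq V] {M : Finset (Sym2 V)} {w : Finset (Sym2 V) → ℝ}
    (h : ∀ e ∈ M, IsChoreFor w M e ∨ IsDummyFor w M e) (S : Finset (Sym2 V)) (hS : S ⊆ M) :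
    w S ≤ w ∅ := by
  induction S using Finset.induction_on with
  | empty => exact le_rfl
  | insert a s ha ih =>
    have h1 : s ⊆ M := fun x hx => hS (Finset.mem_insert_of_mem hx)
    have h2 : s ⊆ M.erase a := fun x hx =>
      Finset.mem_erase.2 ⟨fun hh => ha (hh ▸ hx), h1 hx⟩
    have h3 := ih h1
    rcases h a (hS (Finset.mem_insert_self a s)) with hc | hd
    · exact (hc s h2).le.trans h3
    · exact (hd s h2).le.trans h3

lemma aux_eq_empty {V : Type*} [DecidableEq V] {M : Finset (Sym2 V)} {w : Finset (Sym2 V) → ℝ}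
    (S : Finset (Sym2 V)) (hS : S ⊆ M) (h : ∀ e ∈ S, IsDummyFor w M e) :
    w S = w ∅ := by
  induction S using Finset.induction_on with
  | empty => rfl
  | insert a s ha ih =>
    have h1 : s ⊆ M := fun x hx => hS (Finset.mem_insert_of_mem hx)
    have h2 : s ⊆ M.erase a := fun x hx =>
      Finset.mem_erase.2 ⟨fun hh => ha (hh ▸ hx), h1 hx⟩
    have h3 := ih h1 (fun e he => h e (Finset.mem_insert_of_mem he))
    exact (h a (Finset.mem_insert_self a s) s h2).trans h3

lemma aux_chore_erase {V : Type*} [DecidableEq V] {M : Finset (Sym2 V)} {w : Finset (Sym2 V) → ℝ}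
    {S : Finset (Sym2 V)} (hS : S ⊆ M) {e : Sym2 V} (he : e ∈ S) (h : IsChoreFor w M e) :
    w S < w (S.erase e) := by
  have := h (S.erase e) (Finset.erase_subset_erase e hS)
  rwa [Finset.insert_erase he] at this

/-- A neighbour closer to the root. -/
lemma aux_parent {V : Type*} (G : SimpleGraph V) (r u : V) (h : G.Reachable u r) (hne : u ≠ r) :
    ∃ p, G.Adj u p ∧ G.dist p r < G.dist u r := by
  obtain ⟨w, hw⟩ := h.exists_walk_length_eq_dist
  cases w with
  | nil => exact absurd rfl hne
  | cons hadj q =>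
    refine ⟨_, hadj, ?_⟩
    have := SimpleGraph.dist_le q
    simp only [SimpleGraph.Walk.length_cons] at hw
    omega

lemma aux_hall {V : Type*} [Fintype V] [DecidableEq V] (G : SimpleGraph V)
    (c : G.ConnectedComponent)
    (h : {e : Sym2 V | e ∈ G.edgeSet ∧ ∀ x ∈ e, G.connectedComponentMk x = c}.ncard ≤
        {x : V | G.connectedComponentMk x = c}.ncard) :
    ∃ f : {e : Sym2 V // e ∈ G.edgeSet ∧ ∀ x ∈ e, G.connectedComponentMk x = c} → V,
      Function.Injective f ∧ ∀ e, f e ∈ e.1 := by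
  classical
  have key := (Finset.all_card_le_biUnion_card_iff_exists_injective
    (fun e : {e : Sym2 V // e ∈ G.edgeSet ∧ ∀ x ∈ e, G.connectedComponentMk x = c} =>
      (Finset.univ.filter (fun x : V => x ∈ e.1)))).1 ?_
  · obtain ⟨f, hf, hf2⟩ := key
    exact ⟨f, hf, fun e => by simpa using hf2 e⟩
  intro s
  set W := s.biUnion (fun e => Finset.univ.filter (fun x : V => x ∈ e.1)) with hW
  rcases s.eq_empty_or_nonempty with rfl | ⟨e0, he0⟩
  · simp
  have hmem : ∀ e ∈ s, ∀ x ∈ e.1, x ∈ W := by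
    intro e he x hx
    rw [hW, Finset.mem_biUnion]
    exact ⟨e, he, by simpa using hx⟩
  have hWc : ∀ x ∈ W, G.connectedComponentMk x = c := by
    intro x hx
    rw [hW, Finset.mem_biUnion] at hx
    obtain ⟨e, he, hx⟩ := hx
    exact e.2.2 x (by simpa using hx)
  obtain ⟨r, hr⟩ : ∃ r, r ∈ W := ⟨e0.1.out.1, hmem e0 he0 _ (Sym2.out_fst_mem _)⟩
  have hpar : ∀ u : V, ∃ p, G.connectedComponentMk u = c → u ∉ W →
      G.Adj u p ∧ G.dist p r < G.dist u r := by
    intro u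
    by_cases hu : G.connectedComponentMk u = c ∧ u ∉ W
    · obtain ⟨p, hp⟩ := aux_parent G r u
        (SimpleGraph.ConnectedComponent.exact (hu.1.trans (hWc r hr).symm))
        (fun hh => hu.2 (hh ▸ hr))
      exact ⟨p, fun _ _ => hp⟩
    · exact ⟨u, fun h1 h2 => absurd ⟨h1, h2⟩ hu⟩
  choose p hp using hpar
  set C : Finset V := Finset.univ.filter (fun x => G.connectedComponentMk x = c) with hC
  set E : Finset (Sym2 V) := Finset.univ.filter
    (fun e => e ∈ G.edgeSet ∧ ∀ x ∈ e, G.connectedComponentMk x = c) with hE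
  have hCE : E.card ≤ C.card := by
    rw [← Set.ncard_coe_finset, ← Set.ncard_coe_finset]
    simpa [hC, hE] using h
  have hWC : W ⊆ C := fun x hx => by simpa [hC] using hWc x hx
  set S : Finset (Sym2 V) := s.map (Function.Embedding.subtype _) with hS
  have hScard : S.card = s.card := Finset.card_map _
  set T : Finset (Sym2 V) := (C \ W).image (fun u => s(u, p u)) with hT
  have hTcard : T.card = (C \ W).card := by
    apply Finset.card_image_of_injOn
    intro u hu u' hu' heq
    simp only [hC, Finset.coe_sdiff, Set.mem_sdiff, Finset.mem_coe, Finset.mem_filter,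
      Finset.mem_univ, true_and] at hu hu'
    have a := hp u hu.1 hu.2
    have b := hp u' hu'.1 hu'.2
    simp only [Sym2.eq_iff] at heq
    rcases heq with h1 | h1
    · exact h1.1
    · have a2 := a.2
      have b2 := b.2
      rw [h1.2] at a2
      rw [← h1.1] at b2
      omega
  have hdisj : Disjoint S T := by
    rw [Finset.disjoint_left]
    intro e he he'
    simp only [hT, Finset.mem_image, Finset.mem_sdiff] at he'
    obtain ⟨u, hu, rfl⟩ := he'
    simp only [hS, Finset.mem_map, Function.Embedding.subtype_apply] at he
    obtain ⟨e', he', h2⟩ := he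
    exact hu.2 (hmem e' he' u (by rw [h2]; exact Sym2.mem_mk_left _ _))
  have hsub : S ∪ T ⊆ E := by
    intro e he
    rw [hE, Finset.mem_filter]
    refine ⟨Finset.mem_univ _, ?_⟩
    rcases Finset.mem_union.1 he with he | he
    · simp only [hS, Finset.mem_map, Function.Embedding.subtype_apply] at he
      obtain ⟨e', he', rfl⟩ := he
      exact e'.2
    · simp only [hT, Finset.mem_image, Finset.mem_sdiff] at he
      obtain ⟨u, hu, rfl⟩ := he
      have huc : G.connectedComponentMk u = c := by simpa [hC] using hu.1
      have a := hp u huc hu.2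
      refine ⟨a.1, ?_⟩
      intro x hx
      rcases Sym2.mem_iff.1 hx with rfl | rfl
      · exact huc
      · rw [← huc]
        exact (SimpleGraph.ConnectedComponent.sound a.1.reachable).symm
  have h1 := Finset.card_le_card hsub
  rw [Finset.card_union_of_disjoint hdisj] at h1
  have h2 := Finset.card_sdiff_add_card_eq_card hWC
  omega

lemma aux_edge_comp {V : Type*} (G : SimpleGraph V) {e : Sym2 V} (he : e ∈ G.edgeSet) {i : V}
    (hi : i ∈ e) : ∀ x ∈ e, G.connectedComponentMk x = G.connectedComponentMk i := by
  induction e using Sym2.ind with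
  | _ a b =>
    have hab : G.Adj a b := he
    have h := SimpleGraph.ConnectedComponent.sound hab.reachable
    intro x hx
    rcases Sym2.mem_iff.1 hx with rfl | rfl <;> rcases Sym2.mem_iff.1 hi with rfl | rfl <;>
      first | rfl | exact h | exact h.symm

/-- For a chores instance on a simple graph in which every edge is a
chore for both of its endpoint agents, an EFX₋ orientation exists iff every connected
component of the graph has at most as many edges as vertices. -/
theorem stmt3 {V : Type*} [Fintype V] [DecidableEq V]
    (G : SimpleGraph V) [DecidableRel G.Adj]
    (v : V → Finset (Sym2 V) → ℝ)
    (hvalid : ValidInstance G.edgeFinset v)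
    (hchore : ∀ e ∈ G.edgeFinset, ∀ i ∈ e, IsChoreFor (v i) G.edgeFinset e) :
    (∃ X : V → Finset (Sym2 V),
        IsAllocation G.edgeFinset X ∧ IsOrientation X ∧ CondOwnStrict v X) ↔
    (∀ c : G.ConnectedComponent,
        {e : Sym2 V | e ∈ G.edgeSet ∧ ∀ x ∈ e, G.connectedComponentMk x = c}.ncard ≤
        {x : V | G.connectedComponentMk x = c}.ncard) := by
  classical
  have hcd : ∀ i, ∀ e ∈ G.edgeFinset,
      IsChoreFor (v i) G.edgeFinset e ∨ IsDummyFor (v i) G.edgeFinset e := by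
    intro i e he
    by_cases hi : i ∈ e
    · exact Or.inl (hchore e he i hi)
    · exact Or.inr (hvalid.2.2 i e he hi)
  constructor
  · rintro ⟨X, ⟨hXM, hXu⟩, hXo, hX⟩ c
    have hone : ∀ i, ∀ e₁ ∈ X i, ∀ e₂ ∈ X i, e₁ = e₂ := by
      intro i e₁ h1 e₂ h2
      by_contra hne
      obtain ⟨j, hj⟩ := Sym2.mem_iff_exists.1 (hXo i e₁ h1)
      have hij : i ≠ j := by
        rintro rfl
        exact hvalid.1 e₁ (hXM i h1) (by rw [hj]; simp)
      have hXj : v i (X j) = v i ∅ := by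
        apply aux_eq_empty (X j) (hXM j)
        intro e he
        apply hvalid.2.2 i e (hXM j he)
        intro hie
        have hee : e = e₁ := by
          rw [hj]
          exact (Sym2.mem_and_mem_iff hij).1 ⟨hie, hXo j e he⟩
        subst hee
        exact hij ((hXu e (hXM j he)).unique h1 he)
      have a1 := aux_chore_erase (hXM i) h1 (hchore e₁ (hXM i h1) i (hXo i e₁ h1))
      have hsub : (X i).erase e₁ ⊆ G.edgeFinset := (Finset.erase_subset _ _).trans (hXM i)
      have a2 := aux_chore_erase hsub (Finset.mem_erase.2 ⟨Ne.symm hne, h2⟩)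
        (hchore e₂ (hXM i h2) i (hXo i e₂ h2))
      have a3 := aux_le_empty (hcd i) (((X i).erase e₁).erase e₂)
        ((Finset.erase_subset _ _).trans hsub)
      have henv : Envies v X i j := by
        unfold Envies
        linarith
      have := hX i j henv e₁ h1 a1
      linarith
    have hown : ∀ e : Sym2 V, ∃ i, e ∈ G.edgeSet → e ∈ X i := by
      intro e
      by_cases he : e ∈ G.edgeSet
      · obtain ⟨i, hi, _⟩ := hXu e (SimpleGraph.mem_edgeFinset.2 he)
        exact ⟨i, fun _ => hi⟩
      · exact ⟨e.out.1, fun h => absurd h he⟩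
    choose o ho using hown
    apply Set.ncard_le_ncard_of_injOn o
    · rintro e ⟨he, hec⟩
      exact hec _ (hXo _ _ (ho e he))
    · rintro e ⟨he, hec⟩ e' ⟨he', hec'⟩ heq
      have h1 := ho e he
      have h2 := ho e' he'
      rw [heq] at h1
      exact hone _ e h1 e' h2
  · intro h
    choose f hf hf2 using fun c => aux_hall G c (h c)
    let X : V → Finset (Sym2 V) := fun i => Finset.univ.filter (fun e =>
      ∃ hh : e ∈ G.edgeSet ∧ ∀ x ∈ e, G.connectedComponentMk x = G.connectedComponentMk i,
        f (G.connectedComponentMk i) ⟨e, hh⟩ = i)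
    have hXmem : ∀ i e, e ∈ X i ↔
      ∃ hh : e ∈ G.edgeSet ∧ ∀ x ∈ e, G.connectedComponentMk x = G.connectedComponentMk i,
        f (G.connectedComponentMk i) ⟨e, hh⟩ = i := by
      intro i e
      simp [X]
    have hXM : ∀ i, X i ⊆ G.edgeFinset := by
      intro i e he
      obtain ⟨hh, _⟩ := (hXmem i e).1 he
      exact SimpleGraph.mem_edgeFinset.2 hh.1
    have hXo : IsOrientation X := by
      intro i e he
      obtain ⟨hh, h2⟩ := (hXmem i e).1 he
      have := hf2 (G.connectedComponentMk i) ⟨e, hh⟩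
      rwa [h2] at this
    have hXne : ∀ i, ∀ e ∈ X i, X i = {e} := by
      intro i e he
      obtain ⟨hh, h2⟩ := (hXmem i e).1 he
      ext e'
      rw [Finset.mem_singleton]
      constructor
      · intro he'
        obtain ⟨hh', h2'⟩ := (hXmem i e').1 he'
        have := hf _ (h2'.trans h2.symm)
        exact congrArg Subtype.val this
      · rintro rfl
        exact he
    refine ⟨X, ⟨hXM, ?_⟩, hXo, ?_⟩
    · intro e he
      have he' := SimpleGraph.mem_edgeFinset.1 he
      have hc : ∃ c : G.ConnectedComponent, ∀ x ∈ e, G.connectedComponentMk x = c :=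
        ⟨_, aux_edge_comp G he' (Sym2.out_fst_mem e)⟩
      obtain ⟨c, hc⟩ := hc
      have hiff : ∀ i, e ∈ X i ↔ f c ⟨e, he', hc⟩ = i := by
        intro i
        constructor
        · intro hi
          have hic := hc i (hXo i e hi)
          subst hic
          exact ((hXmem i e).1 hi).2
        · intro hi
          have hie : i ∈ e := by
            have := hf2 c ⟨e, he', hc⟩
            rwa [hi] at this
          have hic := hc i hie
          subst hic
          exact (hXmem i e).2 ⟨⟨he', hc⟩, hi⟩
      refine ⟨f c ⟨e, he', hc⟩, (hiff _).2 rfl, ?_⟩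
      intro i hi
      exact ((hiff i).1 hi).symm
    · intro i j _ e he _
      rw [hXne i e he, Finset.erase_singleton]
      exact aux_le_empty (hcd i) (X j) (hXM j)
end

section
/- For any chores instance on a simple graph, an orientation X = (X_1, …, X_n) is EFX_0 if and only if for every agent a_i: if X_i contains an edge that is a chore for a_i, then |X_i| = 1; and otherwise, every edge in X_i is a dummy for a_i. -/
open Finset

variable {V : Type*} [DecidableEq V]

theorem aux_le {V : Type*} [DecidableEq V] (M : Finset (Sym2 V)) (v : Finset (Sym2 V) → ℝ)
    (h : ∀ e ∈ M, IsChoreFor v M e ∨ IsDummyFor v M e) (S : Finset (Sym2 V)) :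
    S ⊆ M → v S ≤ v ∅ := by
  induction S using Finset.induction_on with
  | empty => intro _; exact le_rfl
  | insert a S ha ih =>
    intro hS
    have h1 : S ⊆ M := fun x hx => hS (Finset.mem_insert_of_mem hx)
    have h2 : S ⊆ M.erase a := fun x hx =>
      Finset.mem_erase.2 ⟨fun h => ha (h ▸ hx), h1 hx⟩
    rcases h a (hS (Finset.mem_insert_self a S)) with hc | hc
    · exact (hc S h2).le.trans (ih h1)
    · exact (hc S h2).le.trans (ih h1)

theorem aux_eq {V : Type*} [DecidableEq V] (M : Finset (Sym2 V)) (v : Finset (Sym2 V) → ℝ)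
    (S : Finset (Sym2 V)) :
    S ⊆ M → (∀ e ∈ S, IsDummyFor v M e) → v S = v ∅ := by
  induction S using Finset.induction_on with
  | empty => intro _ _; rfl
  | insert a S ha ih =>
    intro hS hd
    have h1 : S ⊆ M := fun x hx => hS (Finset.mem_insert_of_mem hx)
    have h2 : S ⊆ M.erase a := fun x hx =>
      Finset.mem_erase.2 ⟨fun h => ha (h ▸ hx), h1 hx⟩
    rw [hd a (Finset.mem_insert_self a S) S h2]
    exact ih h1 (fun e he => hd e (Finset.mem_insert_of_mem he))

theorem aux_lt {V : Type*} [DecidableEq V] (M : Finset (Sym2 V)) (v : Finset (Sym2 V) → ℝ)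
    (h : ∀ e ∈ M, IsChoreFor v M e ∨ IsDummyFor v M e) (S : Finset (Sym2 V))
    (hS : S ⊆ M) (e : Sym2 V) (he : e ∈ S) (hc : IsChoreFor v M e) : v S < v ∅ := by
  have h1 := hc (S.erase e) (Finset.erase_subset_erase e hS)
  rw [Finset.insert_erase he] at h1
  exact h1.trans_le (aux_le M v h _ ((Finset.erase_subset e S).trans hS))

/-- For a chores instance on a simple graph, an orientation is EFX₀
iff every agent either receives exactly one edge when her bundle contains a chore for
her, and otherwise receives only dummies. -/
theorem stmt4 {V : Type*} [DecidableEq V]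
    (M : Finset (Sym2 V)) (v : V → Finset (Sym2 V) → ℝ)
    (hvalid : ValidInstance M v)
    (hchores : ∀ (i : V), ∀ e ∈ M, IsChoreFor (v i) M e ∨ IsDummyFor (v i) M e)
    (X : V → Finset (Sym2 V))
    (hX : IsAllocation M X) (hor : IsOrientation X) :
    CondOwnWeak v X ↔
      ∀ i : V,
        ((∃ e ∈ X i, IsChoreFor (v i) M e) → (X i).card = 1) ∧
        ((¬ ∃ e ∈ X i, IsChoreFor (v i) M e) → ∀ e ∈ X i, IsDummyFor (v i) M e) := by
  constructor
  · intro hE i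
    refine ⟨?_, ?_⟩
    · rintro ⟨e, he, hc⟩
      by_contra hcard
      have hpos : 0 < (X i).card := Finset.card_pos.2 ⟨e, he⟩
      obtain ⟨f, hf, hfe⟩ := Finset.exists_mem_ne (by omega : 1 < (X i).card) e
      have hfM := hX.1 i hf
      obtain ⟨k, rfl⟩ := Sym2.mem_iff_exists.1 (hor i f hf)
      have hik : i ≠ k := fun h => hvalid.1 _ hfM (by simpa using h)
      have hk : v i (X k) = v i ∅ := by
        refine aux_eq M (v i) (X k) (hX.1 k) fun g hg => ?_
        refine hvalid.2.2 i g (hX.1 k hg) fun hig => ?_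
        have hg' : g = s(i, k) := (Sym2.mem_and_mem_iff hik).1 ⟨hig, hor k g hg⟩
        subst hg'
        exact hik ((hX.2 _ hfM).unique hf hg)
      have henv : Envies v X i k := by
        unfold Envies
        rw [hk]
        exact aux_lt M (v i) (hchores i) (X i) (hX.1 i) e he hc
      have hle : v i (X i) ≤ v i ((X i).erase s(i, k)) := by
        have hsub := Finset.erase_subset_erase s(i, k) (hX.1 i)
        have hins := Finset.insert_erase hf
        rcases hchores i _ hfM with h | h
        · have := h _ hsub
          rw [hins] at this
          exact this.le
        · have := h _ hsub
          rw [hins] at this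
          exact this.le
      have h1 := hE i k henv _ hf hle
      rw [hk] at h1
      exact absurd (aux_lt M (v i) (hchores i) ((X i).erase s(i, k))
        ((Finset.erase_subset _ _).trans (hX.1 i)) e
        (Finset.mem_erase.2 ⟨hfe.symm, he⟩) hc) (not_lt.2 h1)
    · intro hn e he
      exact (hchores i e (hX.1 i he)).resolve_left fun h => hn ⟨e, he, h⟩
  · intro h i j henv e he _
    have hj := aux_le M (v i) (hchores i) (X j) (hX.1 j)
    by_cases hc : ∃ e ∈ X i, IsChoreFor (v i) M e
    · obtain ⟨a, ha⟩ := Finset.card_eq_one.1 ((h i).1 hc)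
      rw [ha] at he
      rw [Finset.mem_singleton.1 he, ha]
      simpa using hj
    · have := aux_eq M (v i) (X i) (hX.1 i) ((h i).2 hc)
      unfold Envies at henv
      linarith
end

section
/- Consider a chores instance on a simple graph that admits an EFX_0 orientation. Let N' ⊊ N and let X^p = (X^p_1, …, X^p_n) be a partial orientation that is maximal with respect to N' (i.e., ⋃_{a_i ∈ N'} X^p_i = ⋃_{a_i ∈ N'} E_i, where E_i is the set of edges incident to a_i) and in which every agent in N \ N' receives an empty bundle. If X^p satisfies the condition that for every agent a_i, either X^p_i contains a chore for a_i and |X^p_i| = 1, or every edge in X^p_i is a dummy for a_i, then X^p is implementable: there exists an EFX_0 orientation X = (X_1, …, X_n) with X^p_i ⊆ X_i for every agent a_i. -/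
open Finset

variable {V : Type*} [DecidableEq V]

/-- A partial orientation: pairwise disjoint bundles of edges of `M`, each allocated
edge going to one of its endpoint agents. -/
def IsPartialOrientation (M : Finset (Sym2 V)) (X : V → Finset (Sym2 V)) : Prop :=
  (∀ i, X i ⊆ M) ∧ (∀ i j, i ≠ j → Disjoint (X i) (X j)) ∧ ∀ i, ∀ e ∈ X i, i ∈ e

theorem val_anti {V : Type*} [DecidableEq V] (M : Finset (Sym2 V)) (w : Finset (Sym2 V) → ℝ)
    (hc : ∀ e ∈ M, IsChoreFor w M e ∨ IsDummyFor w M e)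
    (S T : Finset (Sym2 V)) (hT : T ⊆ M) (hST : S ⊆ T) : w T ≤ w S := by
  have key : ∀ D : Finset (Sym2 V), D ⊆ M → Disjoint D S → w (D ∪ S) ≤ w S := by
    intro D
    induction D using Finset.induction_on with
    | empty => intro _ _; simp
    | insert e D he ih =>
      intro hD hdis
      rw [Finset.disjoint_insert_left] at hdis
      have hDM : D ⊆ M := fun x hx => hD (Finset.mem_insert_of_mem hx)
      have h1 := ih hDM hdis.2
      have heM : e ∈ M := hD (Finset.mem_insert_self _ _)
      have hsub : D ∪ S ⊆ M.erase e := by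
        intro x hx
        rw [Finset.mem_erase]
        rcases Finset.mem_union.1 hx with h | h
        · exact ⟨fun hh => he (hh ▸ h), hDM h⟩
        · exact ⟨fun hh => hdis.1 (hh ▸ h), hT (hST h)⟩
      rw [Finset.insert_union]
      rcases hc e heM with h | h
      · exact (h _ hsub).le.trans h1
      · exact (h _ hsub).le.trans h1
  have := key (T \ S) (Finset.sdiff_subset.trans hT) Finset.sdiff_disjoint
  rwa [Finset.sdiff_union_of_subset hST] at this

theorem val_dummy {V : Type*} [DecidableEq V] (M : Finset (Sym2 V)) (w : Finset (Sym2 V) → ℝ)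
    (T : Finset (Sym2 V)) : T ⊆ M → (∀ e ∈ T, IsDummyFor w M e) → w T = w ∅ := by
  induction T using Finset.induction_on with
  | empty => intro _ _; rfl
  | insert e D he ih =>
    intro hD hd
    have hDM : D ⊆ M := fun x hx => hD (Finset.mem_insert_of_mem hx)
    rw [hd e (Finset.mem_insert_self _ _) D (fun x hx => Finset.mem_erase.2
      ⟨fun hh => he (hh ▸ hx), hDM hx⟩)]
    exact ih hDM (fun x hx => hd x (Finset.mem_insert_of_mem hx))

/-- An EFX₀ orientation gives each agent only dummies, or one item. -/
theorem efx_char {V : Type*} [DecidableEq V]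
    (M : Finset (Sym2 V)) (v : V → Finset (Sym2 V) → ℝ)
    (hvalid : ValidInstance M v)
    (hchores : ∀ (i : V), ∀ e ∈ M, IsChoreFor (v i) M e ∨ IsDummyFor (v i) M e)
    (Y : V → Finset (Sym2 V)) (hA : IsAllocation M Y) (hO : IsOrientation Y)
    (hE : CondOwnWeak v Y) (i : V) :
    (Y i).card ≤ 1 ∨ ∀ e ∈ Y i, IsDummyFor (v i) M e := by
  by_contra hcon
  push Not at hcon
  obtain ⟨hcard, e, he, hnd⟩ := hcon
  have heM := hA.1 i he
  have hch : IsChoreFor (v i) M e := (hchores i e heM).resolve_right hnd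
  obtain ⟨f, hf, hfe⟩ := Finset.exists_mem_ne hcard e
  obtain ⟨k, rfl⟩ := Sym2.mem_iff_exists.1 (hO i e he)
  have hik : k ≠ i := by
    rintro rfl
    exact hvalid.1 _ heM (by simp)
  have hYk : v i (Y k) = v i ∅ := by
    apply val_dummy M (v i) _ (hA.1 k)
    intro g hg
    apply hvalid.2.2 i g (hA.1 k hg)
    intro hig
    have hge : g = s(i, k) := ((Sym2.mem_and_mem_iff hik.symm).1 ⟨hig, hO k g hg⟩)
    subst hge
    exact hik ((hA.2 _ heM).unique hg he)
  have h0 : v i {s(i, k)} < v i ∅ := by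
    simpa using hch ∅ (Finset.empty_subset _)
  have h1 : v i (Y i) ≤ v i {s(i, k)} :=
    val_anti M (v i) (hchores i) _ _ (hA.1 i) (by simpa using he)
  have h2 : v i ((Y i).erase f) ≤ v i {s(i, k)} :=
    val_anti M (v i) (hchores i) _ _ ((Finset.erase_subset _ _).trans (hA.1 i))
      (by simpa using ⟨hfe.symm, he⟩)
  have h3 : v i (Y i) ≤ v i ((Y i).erase f) :=
    val_anti M (v i) (hchores i) _ _ (hA.1 i) (Finset.erase_subset _ _)
  have h4 := hE i k (by unfold Envies; linarith) f hf h3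
  linarith

/-- Conversely, that shape suffices. -/
theorem efx_of_char {V : Type*} [DecidableEq V]
    (M : Finset (Sym2 V)) (v : V → Finset (Sym2 V) → ℝ)
    (hchores : ∀ (i : V), ∀ e ∈ M, IsChoreFor (v i) M e ∨ IsDummyFor (v i) M e)
    (X : V → Finset (Sym2 V)) (hX : ∀ i, X i ⊆ M)
    (h : ∀ i, (X i).card ≤ 1 ∨ ∀ e ∈ X i, IsDummyFor (v i) M e) : CondOwnWeak v X := by
  intro i j henv e he _
  have hj : v i (X j) ≤ v i ∅ :=
    val_anti M (v i) (hchores i) _ _ (hX j) (Finset.empty_subset _)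
  rcases h i with h1 | h1
  · have : (X i).erase e = ∅ := by
      rw [← Finset.card_eq_zero, Finset.card_erase_of_mem he]; omega
    rwa [this]
  · have := val_dummy M (v i) _ (hX i) h1
    unfold Envies at henv
    linarith

/-- In a chores instance admitting an EFX₀ orientation, a maximal
partial orientation with respect to a proper subset `N'` of the agents, in which all
agents outside `N'` get empty bundles and which satisfies the characterization of
Lemma 3.5, is implementable. -/
theorem stmt5 {V : Type*} [Fintype V] [DecidableEq V]
    (M : Finset (Sym2 V)) (v : V → Finset (Sym2 V) → ℝ)
    (hvalid : ValidInstance M v)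
    (hchores : ∀ (i : V), ∀ e ∈ M, IsChoreFor (v i) M e ∨ IsDummyFor (v i) M e)
    (hexists : ∃ X : V → Finset (Sym2 V),
        IsAllocation M X ∧ IsOrientation X ∧ CondOwnWeak v X)
    (N' : Finset V) (hN' : N' ⊂ Finset.univ)
    (Xp : V → Finset (Sym2 V))
    (hXp : IsPartialOrientation M Xp)
    (hmax : N'.biUnion Xp = N'.biUnion (fun i => M.filter (fun e => i ∈ e)))
    (hout : ∀ i ∉ N', Xp i = ∅)
    (hcond : ∀ i : V,
        ((∃ e ∈ Xp i, IsChoreFor (v i) M e) ∧ (Xp i).card = 1) ∨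
        (∀ e ∈ Xp i, IsDummyFor (v i) M e)) :
    ∃ X : V → Finset (Sym2 V),
      IsAllocation M X ∧ IsOrientation X ∧ CondOwnWeak v X ∧ ∀ i, Xp i ⊆ X i := by
  obtain ⟨Y, hA, hO, hE⟩ := hexists
  have hY := efx_char M v hvalid hchores Y hA hO hE
  obtain ⟨hp1, hp2, hp3⟩ := hXp
  have hsub : ∀ i, (if i ∈ N' then Xp i else (Y i).filter (fun e => ∀ j ∈ N', j ∉ e)) ⊆ M := by
    intro i
    split_ifs
    · exact hp1 i
    · exact (Finset.filter_subset _ _).trans (hA.1 i)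
  refine ⟨fun i => if i ∈ N' then Xp i else (Y i).filter (fun e => ∀ j ∈ N', j ∉ e),
    ⟨hsub, ?_⟩, ?_, efx_of_char M v hchores _ hsub ?_, ?_⟩
  · intro e he
    by_cases hinc : ∃ j ∈ N', j ∈ e
    · obtain ⟨j, hj, hje⟩ := hinc
      have hmem : e ∈ N'.biUnion Xp := by
        rw [hmax]
        exact Finset.mem_biUnion.2 ⟨j, hj, Finset.mem_filter.2 ⟨he, hje⟩⟩
      obtain ⟨k, hk, hek⟩ := Finset.mem_biUnion.1 hmem
      refine ⟨k, by simpa [hk] using hek, ?_⟩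
      intro l hl
      by_cases hlN : l ∈ N'
      · simp only [hlN, if_true] at hl
        by_contra hne
        exact Finset.disjoint_left.1 (hp2 l k hne) hl hek
      · simp only [hlN, if_false, Finset.mem_filter] at hl
        exact absurd hje (hl.2 j hj)
    · push Not at hinc
      obtain ⟨k, hk, huniq⟩ := hA.2 e he
      have hkN : k ∉ N' := fun h => hinc k h (hO k e hk)
      refine ⟨k, ?_, ?_⟩
      · simp only [hkN, if_false, Finset.mem_filter]
        exact ⟨hk, hinc⟩
      · intro l hl
        by_cases hlN : l ∈ N'
        · simp only [hlN, if_true] at hl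
          exact absurd (hp3 l e hl) (hinc l hlN)
        · simp only [hlN, if_false, Finset.mem_filter] at hl
          exact huniq l hl.1
  · intro i e he
    by_cases hi : i ∈ N'
    · simp only [hi, if_true] at he
      exact hp3 i e he
    · simp only [hi, if_false, Finset.mem_filter] at he
      exact hO i e he.1
  · intro i
    by_cases hi : i ∈ N'
    · simp only [hi, if_true]
      exact (hcond i).imp (fun h => h.2.le) id
    · simp only [hi, if_false]
      exact (hY i).imp (fun h => (Finset.card_filter_le _ _).trans h)
        (fun h e he => h e (Finset.mem_filter.1 he).1)
  · intro i
    by_cases hi : i ∈ N'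
    · simp [hi]
    · simp [hout i hi]
end

section
/- Consider the instance on the path with three agents a_1, a_2, a_3 and two edges e_{1,2} = (a_1, a_2) and e_{2,3} = (a_2, a_3), with additive valuations given by v_1(e_{1,2}) = v_2(e_{1,2}) = 1, v_2(e_{2,3}) = v_3(e_{2,3}) = -1, and value 0 on all non-incident edges (so e_{1,2} is a good for both its endpoints and e_{2,3} is a chore for both its endpoints). Then no orientation of this graph is EFX^0_-, and hence no orientation is EFX^0_0. -/
open Finset

variable {V : Type*} [DecidableEq V]

/-- The edge set of the path `a₁ — a₂ — a₃`. -/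
def pathEdges : Finset (Sym2 (Fin 3)) := {s(0, 1), s(1, 2)}

/-- On the path with three agents, where the edge `(a₁, a₂)` is worth
`1` to both of its endpoints, the edge `(a₂, a₃)` is worth `-1` to both of its
endpoints, and all non-incident edges are worth `0`, no orientation is EFX⁰₋ and
hence no orientation is EFX⁰₀. -/
theorem stmt7 (v : Fin 3 → Finset (Sym2 (Fin 3)) → ℝ)
    (hv : ∀ (i : Fin 3) (S : Finset (Sym2 (Fin 3))),
      v i S = ∑ e ∈ S,
        (if i ∈ e then (if e = s(0, 1) then (1 : ℝ) else if e = s(1, 2) then -1 else 0)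
         else 0)) :
    ∀ X : Fin 3 → Finset (Sym2 (Fin 3)),
      IsAllocation pathEdges X → IsOrientation X →
        ¬ (CondEnviedWeak v X ∧ CondOwnStrict v X) ∧
        ¬ (CondEnviedWeak v X ∧ CondOwnWeak v X) := by
  intro X hA hO
  obtain ⟨hsub, hex⟩ := hA
  have h01 := hex s(0, 1) (by simp [pathEdges])
  have h12 := hex s(1, 2) (by simp [pathEdges])
  obtain ⟨p, hp, hpu⟩ := h01
  obtain ⟨q, hq, hqu⟩ := h12
  have hpo := hO p _ hp
  have hqo := hO q _ hq
  have hX : ∀ i, X i = (if i = p then {s(0, 1)} else ∅) ∪ (if i = q then {s(1, 2)} else ∅) := by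
    intro i
    ext e
    constructor
    · intro he
      have hm := hsub i he
      simp only [pathEdges, Finset.mem_insert, Finset.mem_singleton] at hm
      rcases hm with rfl | rfl
      · simp [hpu i he]
      · simp [hqu i he]
    · intro he
      rw [Finset.mem_union] at he
      rcases he with he | he
      · split_ifs at he with h
        · rw [Finset.mem_singleton] at he
          subst h he
          exact hp
        · simp at he
      · split_ifs at he with h
        · rw [Finset.mem_singleton] at he
          subst h he
          exact hq
        · simp at he
  have hne : (s(0, 1) : Sym2 (Fin 3)) ≠ s(1, 2) := by decide
  have key : ¬ (CondEnviedWeak v X ∧ CondOwnStrict v X) := by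
    rintro ⟨hE, hS⟩
    have e1 : ({s(0, 1), s(1, 2)} : Finset (Sym2 (Fin 3))).erase s(1, 2) = {s(0, 1)} := by decide
    have v0 : ∀ i, v i ∅ = 0 := by intro i; simp [hv]
    have g0 : v 0 {s(0, 1)} = 1 := by simp [hv]
    have g1 : v 1 {s(0, 1)} = 1 := by simp [hv]
    have g2 : v 2 {s(0, 1)} = 0 := by simp [hv]
    have c1 : v 1 {s(1, 2)} = -1 := by simp [hv]
    have c2 : v 2 {s(1, 2)} = -1 := by simp [hv]
    have b0 : v 0 {s(0, 1), s(1, 2)} = 1 := by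
      rw [hv, Finset.sum_pair hne]; simp
    have hp' : p = 0 ∨ p = 1 := by simpa using hpo
    have hq' : q = 1 ∨ q = 2 := by simpa using hqo
    rcases hp' with rfl | rfl <;> rcases hq' with rfl | rfl
    · have x0 : X 0 = {s(0, 1)} := by rw [hX]; decide
      have x1 : X 1 = {s(1, 2)} := by rw [hX]; decide
      have h := hS 1 0 (by rw [Envies, x0, x1, g1, c1]; norm_num) _ hq
      rw [x0, x1, Finset.erase_singleton, v0, g1, c1] at h
      norm_num at h
    · have x0 : X 0 = {s(0, 1)} := by rw [hX]; decide
      have x2 : X 2 = {s(1, 2)} := by rw [hX]; decide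
      have h := hE 2 0 (by rw [Envies, x0, x2, g2, c2]; norm_num) _ hp
      rw [x0, x2, Finset.erase_singleton, v0, g2, c2] at h
      norm_num at h
    · have x0 : X 0 = ∅ := by rw [hX]; decide
      have x1 : X 1 = {s(0, 1), s(1, 2)} := by rw [hX]; decide
      have h := hE 0 1 (by rw [Envies, x0, x1, v0, b0]; norm_num) _ hq
      rw [x0, x1, e1, v0, g0, b0] at h
      norm_num at h
    · have x1 : X 1 = {s(0, 1)} := by rw [hX]; decide
      have x2 : X 2 = {s(1, 2)} := by rw [hX]; decide
      have h := hE 2 1 (by rw [Envies, x1, x2, g2, c2]; norm_num) _ hp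
      rw [x1, x2, Finset.erase_singleton, v0, g2, c2] at h
      norm_num at h
  exact ⟨key, fun h => key ⟨h.1, fun i j hij e he hlt => h.2 i j hij e he hlt.le⟩⟩
end

section
/- Consider an instance on a simple graph G = (N, M) such that (1) every edge is a good for both of its endpoint agents, (2) every agent has at least one incident edge that is priceless to her, and (3) every edge that is priceless to some agent is priceless to both of its endpoint agents. Then in every EFX^0_0 allocation, each edge is allocated to one of its two endpoint agents (i.e., every EFX^0_0 allocation is an orientation). -/
open Finset

variable {V : Type*} [DecidableEq V]

/-- `e` is priceless to the valuation `v` relative to the item set `M`: any bundle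
containing `e` is strictly preferred to any bundle not containing `e`. -/
def Priceless (v : Finset (Sym2 V) → ℝ) (M : Finset (Sym2 V)) (e : Sym2 V) : Prop :=
  ∀ S₁ ⊆ M, ∀ S₂ ⊆ M, e ∉ S₁ → e ∈ S₂ → v S₁ < v S₂

/-- If every edge is a good for both endpoints, every agent has an
incident priceless edge, and every priceless edge is priceless to both of its
endpoints, then every EFX⁰₀ allocation is an orientation. -/
theorem stmt8 {V : Type*} [DecidableEq V]
    (M : Finset (Sym2 V)) (v : V → Finset (Sym2 V) → ℝ)
    (hvalid : ValidInstance M v)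
    (hgood : ∀ e ∈ M, ∀ i ∈ e, IsGoodFor (v i) M e)
    (hhas : ∀ i : V, ∃ e ∈ M, i ∈ e ∧ Priceless (v i) M e)
    (hboth : ∀ e ∈ M, ∀ i : V, Priceless (v i) M e → ∀ j ∈ e, Priceless (v j) M e)
    (X : V → Finset (Sym2 V)) (hX : IsAllocation M X)
    (hEFX : CondEnviedWeak v X ∧ CondOwnWeak v X) :
    ∀ i, ∀ e ∈ X i, i ∈ e := by
  intro k e he
  by_contra hk
  obtain ⟨hdiag, -, hdummy⟩ := hvalid
  obtain ⟨hsub, huniq⟩ := hX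
  obtain ⟨hE, hO⟩ := hEFX
  have heM : e ∈ M := hsub k he
  have hers : ∀ g, (X k).erase g ⊆ M.erase g := fun g => Finset.erase_subset_erase g (hsub k)
  have hown : v k (X k) = v k ((X k).erase e) := by
    have h := hdummy k e heM hk _ (hers e)
    rwa [Finset.insert_erase he] at h
  -- `k` envies nobody, since she holds a dummy
  have hnoenvy : ∀ j, ¬ Envies v X k j := by
    intro j hj
    have h := hO k j hj e he hown.le
    have h' : v k (X k) < v k (X j) := hj
    linarith
  obtain ⟨f, hfM, hkf, hfp⟩ := hhas k
  obtain ⟨j, hj, hjuniq⟩ := huniq f hfM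
  have hfk : f ∈ X k := by
    by_contra hn
    exact hnoenvy j (hfp _ (hsub k) _ (hsub j) hn hj)
  -- the other endpoint of `f` envies `k`
  obtain ⟨k', rfl⟩ := hkf
  have hne : k ≠ k' := by
    intro h
    exact hdiag _ hfM (by simpa using h)
  have hk'f : k' ∈ s(k, k') := Sym2.mem_mk_right k k'
  have hp' : Priceless (v k') M s(k, k') := hboth _ hfM k hfp k' hk'f
  have hnot : s(k, k') ∉ X k' := by
    intro h
    exact hne ((hjuniq k hfk).trans (hjuniq k' h).symm)
  have henv : Envies v X k' k := hp' _ (hsub k') _ (hsub k) hnot hfk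
  have hef : s(k, k') ≠ e := by
    rintro rfl
    exact hk (Sym2.mem_mk_left k k')
  have hle : v k' ((X k).erase e) ≤ v k' (X k) := by
    by_cases h : k' ∈ e
    · have h1 := hgood e heM k' h _ (hers e)
      rw [Finset.insert_erase he] at h1
      exact h1.le
    · have h1 := hdummy k' e heM h _ (hers e)
      rw [Finset.insert_erase he] at h1
      exact h1.symm.le
  have h1 := hE k' k henv e he hle
  have h2 := hp' _ (hsub k') _ ((Finset.erase_subset _ _).trans (hsub k)) hnot
    (Finset.mem_erase.2 ⟨hef, hfk⟩)
  linarith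
end

section
/- Consider the instance on the complete graph K_4 with agents a_1, a_2, a_3, a_4 and additive valuations where edge (a_1, a_2) has value 10 to both a_1 and a_2, edge (a_3, a_4) has value 10 to both a_3 and a_4, each of the four edges (a_1, a_3), (a_1, a_4), (a_2, a_3), (a_2, a_4) has value 1 to both of its endpoint agents, and every edge has value 0 to every non-endpoint agent. Then no allocation of the six edges among the four agents is EFX^0_0. In particular, there exist goods instances on simple graphs admitting no EFX^0_0 allocation. -/
open Finset

variable {V : Type*} [DecidableEq V]

/-- The six edges of the complete graph `K₄`. -/
def K4Edges : Finset (Sym2 (Fin 4)) :=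
  {s(0, 1), s(2, 3), s(0, 2), s(0, 3), s(1, 2), s(1, 3)}

/-- Natural-number value of the edge `e` for agent `i`. -/
def natVal (i : Fin 4) (e : Sym2 (Fin 4)) : ℕ :=
  if i ∈ e then
    (if e = s(0, 1) ∨ e = s(2, 3) then 10 else if e ∈ K4Edges then 1 else 0)
  else 0

/-- Edges numbered. -/
def edgeW (i : Fin 4) (k : Fin 6) : ℕ :=
  match k.val with
  | 0 => bif i.val.blt 2 then 10 else 0
  | 1 => bif i.val.blt 2 then 0 else 10
  | 2 => bif i.val.beq 0 || i.val.beq 2 then 1 else 0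
  | 3 => bif i.val.beq 0 || i.val.beq 3 then 1 else 0
  | 4 => bif i.val.beq 1 || i.val.beq 2 then 1 else 0
  | _ => bif i.val.beq 1 || i.val.beq 3 then 1 else 0

/-- The edge with a given number. -/
def edgeE (k : Fin 6) : Sym2 (Fin 4) :=
  match k with
  | 0 => s(0, 1)
  | 1 => s(2, 3)
  | 2 => s(0, 2)
  | 3 => s(0, 3)
  | 4 => s(1, 2)
  | 5 => s(1, 3)

theorem edgeW_eq : ∀ i k, edgeW i k = natVal i (edgeE k) := by decide

theorem edgeE_mem : ∀ k, edgeE k ∈ K4Edges := by decide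

theorem K4Edges_eq : K4Edges = Finset.univ.image edgeE := by decide

theorem edgeE_inj : Function.Injective edgeE := by
  unfold Function.Injective
  decide

/-- Value for agent `i` of the bundle of `j`, if the owners are `a, b, c, d, e, f`. -/
def bundleVal (a b c d e f : Fin 4) (i j : Fin 4) : ℕ :=
  (bif a.val.beq j.val then edgeW i 0 else 0) + (bif b.val.beq j.val then edgeW i 1 else 0) +
  (bif c.val.beq j.val then edgeW i 2 else 0) + (bif d.val.beq j.val then edgeW i 3 else 0) +
  (bif e.val.beq j.val then edgeW i 4 else 0) + (bif f.val.beq j.val then edgeW i 5 else 0)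

/-- The owner of edge number `k`. -/
def ownerOf (a b c d e f : Fin 4) (k : Fin 6) : Fin 4 :=
  match k.val with
  | 0 => a
  | 1 => b
  | 2 => c
  | 3 => d
  | 4 => e
  | _ => f

set_option maxRecDepth 100000 in
theorem brute : ∀ a b c d e f : Fin 4, ∃ i j : Fin 4,
    bundleVal a b c d e f i i < bundleVal a b c d e f i j ∧
    ∃ k : Fin 6,
      (ownerOf a b c d e f k = j ∧
        bundleVal a b c d e f i i + edgeW i k < bundleVal a b c d e f i j) ∨
      (ownerOf a b c d e f k = i ∧ edgeW i k = 0) := by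
  decide +kernel

theorem brute' (o : Fin 6 → Fin 4) : ∃ i j : Fin 4,
    (∑ k, if o k = i then edgeW i k else 0) < (∑ k, if o k = j then edgeW i k else 0) ∧
    ∃ k : Fin 6,
      (o k = j ∧ (∑ k, if o k = i then edgeW i k else 0) + edgeW i k <
        (∑ k, if o k = j then edgeW i k else 0)) ∨
      (o k = i ∧ edgeW i k = 0) := by
  have hb : ∀ i j, bundleVal (o 0) (o 1) (o 2) (o 3) (o 4) (o 5) i j =
      ∑ k, if o k = j then edgeW i k else 0 := by
    intro i j
    have h : ∀ (x : Fin 4) (n : ℕ), (bif x.val.beq j.val then n else 0) =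
        if x = j then n else 0 := by
      intro x n
      by_cases hx : x = j
      · simp [hx]
      · have : x.val.beq j.val = false := by
          rw [← Bool.not_eq_true]
          intro hh
          exact hx (Fin.ext (Nat.eq_of_beq_eq_true hh))
        simp [hx, this]
    simp only [bundleVal, h, Fin.sum_univ_six]
  have ho : ∀ k, ownerOf (o 0) (o 1) (o 2) (o 3) (o 4) (o 5) k = o k := by
    intro k
    fin_cases k <;> rfl
  obtain ⟨i, j, h1, k, h2⟩ := brute (o 0) (o 1) (o 2) (o 3) (o 4) (o 5)
  simp only [hb, ho] at h1 h2
  exact ⟨i, j, h1, k, h2⟩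

/-- On `K₄` with additive valuations where `(a₁,a₂)` and `(a₃,a₄)`
are worth `10` to both of their endpoints, the four remaining edges are worth `1` to
both of their endpoints, and every edge is worth `0` to non-endpoints, no allocation
is EFX⁰₀. In particular there are goods instances admitting no EFX⁰₀ allocation. -/
theorem stmt9 (v : Fin 4 → Finset (Sym2 (Fin 4)) → ℝ)
    (hv : ∀ (i : Fin 4) (S : Finset (Sym2 (Fin 4))),
      v i S = ∑ e ∈ S,
        (if i ∈ e then
          (if e = s(0, 1) ∨ e = s(2, 3) then (10 : ℝ)
           else if e ∈ K4Edges then 1 else 0)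
         else 0)) :
    (∀ X : Fin 4 → Finset (Sym2 (Fin 4)),
        IsAllocation K4Edges X → ¬ (CondEnviedWeak v X ∧ CondOwnWeak v X)) ∧
    (∃ (n : ℕ) (M : Finset (Sym2 (Fin n))) (w : Fin n → Finset (Sym2 (Fin n)) → ℝ),
        ValidInstance M w ∧
        (∀ (i : Fin n), ∀ e ∈ M, IsGoodFor (w i) M e ∨ IsDummyFor (w i) M e) ∧
        ∀ X : Fin n → Finset (Sym2 (Fin n)),
          IsAllocation M X → ¬ (CondEnviedWeak w X ∧ CondOwnWeak w X)) := by
  have hn : ∀ i S, v i S = ((∑ e ∈ S, natVal i e : ℕ) : ℝ) := by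
    intro i S
    rw [hv, Nat.cast_sum]
    refine Finset.sum_congr rfl fun e _ => ?_
    unfold natVal
    split_ifs <;> simp
  have main : ∀ X : Fin 4 → Finset (Sym2 (Fin 4)),
      IsAllocation K4Edges X → ¬ (CondEnviedWeak v X ∧ CondOwnWeak v X) := by
    rintro X ⟨hsub, huniq⟩ ⟨hE, hO⟩
    choose! o ho huo using huniq
    have hX : ∀ j e, e ∈ K4Edges → (e ∈ X j ↔ o e = j) := fun j e he =>
      ⟨fun h => (huo e he j h).symm, fun h => h ▸ ho e he⟩
    have hsum : ∀ i j, ∑ e ∈ X j, natVal i e =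
        ∑ k, if o (edgeE k) = j then edgeW i k else 0 := by
      intro i j
      have h1 : X j = K4Edges.filter (fun e => o e = j) := by
        ext e
        rw [Finset.mem_filter]
        exact ⟨fun h => ⟨hsub j h, (hX j e (hsub j h)).1 h⟩, fun h => (hX j e h.1).2 h.2⟩
      rw [h1, Finset.sum_filter, K4Edges_eq, Finset.sum_image fun a _ b _ h => edgeE_inj h]
      simp only [edgeW_eq]
    have her : ∀ i (S : Finset (Sym2 (Fin 4))) e, e ∈ S →
        ∑ x ∈ S.erase e, natVal i x + natVal i e = ∑ x ∈ S, natVal i x :=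
      fun i S e he => Finset.sum_erase_add S (natVal i) he
    obtain ⟨i, j, h1, k, h2⟩ := brute' (fun k => o (edgeE k))
    simp only [← hsum] at h1 h2
    simp only [edgeW_eq] at h2
    have henv : Envies v X i j := by
      unfold Envies
      rw [hn, hn]
      exact_mod_cast h1
    rcases h2 with ⟨hk, h2⟩ | ⟨hk, h2⟩
    · have hm := (hX j _ (edgeE_mem k)).2 hk
      have := hE i j henv _ hm
      simp only [hn, Nat.cast_le] at this
      have h3 := her i _ _ hm
      have h4 := this (by omega)
      omega
    · have hm := (hX i _ (edgeE_mem k)).2 hk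
      have := hO i j henv _ hm
      simp only [hn, Nat.cast_le] at this
      have h3 := her i _ _ hm
      have h4 := this (by omega)
      omega
  have hins : ∀ i e (S : Finset (Sym2 (Fin 4))), S ⊆ K4Edges.erase e →
      v i (insert e S) = natVal i e + v i S := by
    intro i e S hS
    have : e ∉ S := fun h => (Finset.mem_erase.1 (hS h)).1 rfl
    rw [hn, hn, Finset.sum_insert this, Nat.cast_add]
  have hgd : ∀ (i : Fin 4), ∀ e ∈ K4Edges,
      IsGoodFor (v i) K4Edges e ∨ IsDummyFor (v i) K4Edges e := by
    intro i e _
    rcases Nat.eq_zero_or_pos (natVal i e) with h | h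
    · right
      intro S hS
      rw [hins i e S hS, h]
      simp
    · left
      intro S hS
      rw [hins i e S hS]
      have : (0 : ℝ) < natVal i e := by exact_mod_cast h
      linarith
  refine ⟨main, 4, K4Edges, v, ⟨by decide, ?_, ?_⟩, hgd, main⟩
  · intro i e he
    rcases hgd i e he with h | h
    · exact Or.inl h
    · exact Or.inr (Or.inr h)
  · intro i e _ hi S hS
    rw [hins i e S hS]
    simp [natVal, hi]
end

section
/- For every mixed instance on a simple graph, an EFX^0_- allocation always exists. -/
open Finset

variable {V : Type*} [DecidableEq V]

section Proof

set_option linter.unusedSectionVars false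

variable [Fintype V] {M : Finset (Sym2 V)} {v : V → Finset (Sym2 V) → ℝ}
  {X : V → Finset (Sym2 V)}

/-- `e` is an item that is a good for `i`. -/
def Gd (M : Finset (Sym2 V)) (v : V → Finset (Sym2 V) → ℝ) (i : V) (e : Sym2 V) : Prop :=
  e ∈ M ∧ IsGoodFor (v i) M e

/-- `e` is an item that is a chore for `i`. -/
def Ch (M : Finset (Sym2 V)) (v : V → Finset (Sym2 V) → ℝ) (i : V) (e : Sym2 V) : Prop :=
  e ∈ M ∧ IsChoreFor (v i) M e

lemma Gd.inc (hv : ValidInstance M v) {i : V} {e : Sym2 V} (h : Gd M v i e) : i ∈ e := by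
  by_contra hi
  have h1 := hv.2.2 i e h.1 hi ∅ (by simp)
  have h2 := h.2 ∅ (by simp)
  linarith

lemma Ch.inc (hv : ValidInstance M v) {i : V} {e : Sym2 V} (h : Ch M v i e) : i ∈ e := by
  by_contra hi
  have h1 := hv.2.2 i e h.1 hi ∅ (by simp)
  have h2 := h.2 ∅ (by simp)
  linarith

lemma Gd.not_ch {i : V} {e : Sym2 V} (h : Gd M v i e) : ¬ Ch M v i e := by
  intro h'
  have h1 := h'.2 ∅ (by simp)
  have h2 := h.2 ∅ (by simp)
  linarith

lemma val_up (hv : ValidInstance M v) {i : V} {S T : Finset (Sym2 V)} (hST : S ⊆ T) (hT : T ⊆ M)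
    (h : ∀ e ∈ T, e ∉ S → ¬ Ch M v i e) : v i S ≤ v i T := by
  have key : ∀ D : Finset (Sym2 V), D ⊆ T \ S → v i S ≤ v i (S ∪ D) := by
    intro D
    induction D using Finset.induction_on with
    | empty => simp
    | insert a D ha ih =>
      intro hD
      have h1 := ih (fun x hx => hD (mem_insert_of_mem hx))
      have ha1 := mem_sdiff.1 (hD (mem_insert_self a D))
      have hsub : S ∪ D ⊆ M.erase a := by
        intro x hx
        rcases mem_union.1 hx with hx | hx
        · exact mem_erase.2 ⟨fun hh => ha1.2 (hh ▸ hx), hT (hST hx)⟩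
        · exact mem_erase.2 ⟨fun hh => ha (hh ▸ hx),
            hT (mem_sdiff.1 (hD (mem_insert_of_mem hx))).1⟩
      rw [union_insert]
      rcases hv.2.1 i a (hT ha1.1) with hg | hg | hg
      · linarith [hg _ hsub]
      · exact absurd ⟨hT ha1.1, hg⟩ (h a ha1.1 ha1.2)
      · linarith [hg _ hsub]
  have := key (T \ S) (subset_refl _)
  rwa [union_sdiff_of_subset hST] at this

lemma val_dn (hv : ValidInstance M v) {i : V} {S T : Finset (Sym2 V)} (hST : S ⊆ T) (hT : T ⊆ M)
    (h : ∀ e ∈ T, e ∉ S → ¬ Gd M v i e) : v i T ≤ v i S := by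
  have key : ∀ D : Finset (Sym2 V), D ⊆ T \ S → v i (S ∪ D) ≤ v i S := by
    intro D
    induction D using Finset.induction_on with
    | empty => simp
    | insert a D ha ih =>
      intro hD
      have h1 := ih (fun x hx => hD (mem_insert_of_mem hx))
      have ha1 := mem_sdiff.1 (hD (mem_insert_self a D))
      have hsub : S ∪ D ⊆ M.erase a := by
        intro x hx
        rcases mem_union.1 hx with hx | hx
        · exact mem_erase.2 ⟨fun hh => ha1.2 (hh ▸ hx), hT (hST hx)⟩
        · exact mem_erase.2 ⟨fun hh => ha (hh ▸ hx),
            hT (mem_sdiff.1 (hD (mem_insert_of_mem hx))).1⟩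
      rw [union_insert]
      rcases hv.2.1 i a (hT ha1.1) with hg | hg | hg
      · exact absurd ⟨hT ha1.1, hg⟩ (h a ha1.1 ha1.2)
      · linarith [hg _ hsub]
      · linarith [hg _ hsub]
  have := key (T \ S) (subset_refl _)
  rwa [union_sdiff_of_subset hST] at this

/-- Partial allocation of goods where everybody is content up to single-edge bundles. -/
structure PreSolid (M : Finset (Sym2 V)) (v : V → Finset (Sym2 V) → ℝ)
    (X : V → Finset (Sym2 V)) : Prop where
  good : ∀ u, ∀ e ∈ X u, Gd M v u e
  disj : ∀ e u w, e ∈ X u → e ∈ X w → u = w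
  sol : ∀ u e, Gd M v u e → v u {e} ≤ v u (X u) ∨ ∃ j, j ≠ u ∧ X j = {e}

/-- Pre-solid, and with well-founded envy. -/
structure Solid (M : Finset (Sym2 V)) (v : V → Finset (Sym2 V) → ℝ)
    (X : V → Finset (Sym2 V)) : Prop extends PreSolid M v X where
  rank : ∃ ρ : V → ℕ, ∀ u w, Envies v X u w → ρ w < ρ u

lemma PreSolid.sub (hX : PreSolid M v X) (u : V) : X u ⊆ M := fun e he => (hX.good u e he).1

lemma two_ends {a b : V} {e : Sym2 V} (hab : a ≠ b) (ha : a ∈ e) (hb : b ∈ e) : e = s(a, b) :=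
  (Sym2.mem_and_mem_iff hab).1 ⟨ha, hb⟩

lemma PreSolid.envy_single (hv : ValidInstance M v) (hX : PreSolid M v X) {u w : V}
    (h : Envies v X u w) : u ≠ w ∧ X w = {s(u, w)} ∧ Gd M v u s(u, w) := by
  have hne : u ≠ w := by rintro rfl; exact lt_irrefl _ h
  have hex : ∃ e ∈ X w, Gd M v u e := by
    by_contra hno
    push Not at hno
    have h1 : v u (X w) ≤ v u ∅ := val_dn hv (empty_subset _) (hX.sub w) (fun e he _ => hno e he)
    have h2 : v u ∅ ≤ v u (X u) :=
      val_up hv (empty_subset _) (hX.sub u) (fun e he _ => (hX.good u e he).not_ch)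
    unfold Envies at h
    linarith
  obtain ⟨e, he, hg⟩ := hex
  have hee : e = s(u, w) := two_ends hne (hg.inc hv) ((hX.good w e he).inc hv)
  subst hee
  have h1 : v u (X w) ≤ v u {s(u, w)} := by
    apply val_dn hv (by simpa using he) (hX.sub w)
    intro e' he' hne' hg'
    exact hne' (by simpa using two_ends hne (hg'.inc hv) ((hX.good w e' he').inc hv))
  rcases hX.sol u _ hg with h2 | ⟨j, _, hj⟩
  · unfold Envies at h
    linarith
  · have : j = w := hX.disj s(u, w) j w (by simp [hj]) he
    subst this
    exact ⟨hne, hj, hg⟩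

lemma PreSolid.envier_unique (hv : ValidInstance M v) (hX : PreSolid M v X) {u u' w : V}
    (h : Envies v X u w) (h' : Envies v X u' w) : u = u' := by
  obtain ⟨h1, h2, h3⟩ := hX.envy_single hv h
  obtain ⟨h1', h2', h3'⟩ := hX.envy_single hv h'
  rw [h2] at h2'
  have := Finset.singleton_injective h2'
  rw [Sym2.eq_iff] at this
  grind

lemma PreSolid.envy_of_lt (hX : PreSolid M v X) {u : V} {e : Sym2 V} (hg : Gd M v u e)
    (h : v u (X u) < v u {e}) : ∃ j, X j = {e} ∧ Envies v X u j := by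
  rcases hX.sol u e hg with h1 | ⟨j, _, hj⟩
  · linarith
  · exact ⟨j, hj, by unfold Envies; rwa [hj]⟩

/-- Envy ancestor relation. -/
def Anc (v : V → Finset (Sym2 V) → ℝ) (X : V → Finset (Sym2 V)) (u k : V) : Prop :=
  Relation.ReflTransGen (Envies v X) u k

/-- Nobody envies `g`. -/
def Un (v : V → Finset (Sym2 V) → ℝ) (X : V → Finset (Sym2 V)) (g : V) : Prop :=
  ∀ p, ¬ Envies v X p g

lemma not_un {g : V} (h : ¬ Un v X g) : ∃ p, Envies v X p g := by
  unfold Un at h; push Not at h; exact h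

lemma Solid.anc_rank (hX : Solid M v X) : ∃ ρ : V → ℕ, (∀ u w, Envies v X u w → ρ w < ρ u) ∧
    ∀ u w, Anc v X u w → ρ w ≤ ρ u := by
  obtain ⟨ρ, hρ⟩ := hX.rank
  refine ⟨ρ, hρ, ?_⟩
  intro u w h
  induction h with
  | refl => exact le_rfl
  | tail _ h ih => exact (hρ _ _ h).le.trans ih

lemma Anc.refl (k : V) : Anc v X k k := Relation.ReflTransGen.refl

lemma Anc.head {u c k : V} (h : Envies v X u c) (h' : Anc v X c k) : Anc v X u k :=
  Relation.ReflTransGen.head h h'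

lemma Anc.tail {u c k : V} (h : Anc v X u c) (h' : Envies v X c k) : Anc v X u k :=
  Relation.ReflTransGen.tail h h'

/-- if `k` is a descendant, either equal or through a child. -/
lemma Anc.cases {u k : V} (h : Anc v X u k) : u = k ∨ ∃ c, Envies v X u c ∧ Anc v X c k :=
  Relation.ReflTransGen.cases_head h

lemma Un.anc {u k : V} (hk : Un v X k) (h : Anc v X u k) : u = k := by
  rcases Relation.ReflTransGen.cases_tail h with h | ⟨c, _, h⟩
  · exact h.symm
  · exact absurd h (hk c)

/-- envier of an ancestor is an ancestor, and envied proper children are ancestors. -/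
lemma Solid.anc_of_envies (hv : ValidInstance M v) (hX : Solid M v X) {a c u : V}
    (h : Envies v X a c) (h' : Anc v X u c) (hne : u ≠ c) : Anc v X u a := by
  rcases Relation.ReflTransGen.cases_tail h' with h1 | ⟨b, h1, h2⟩
  · exact absurd h1.symm hne
  · rwa [hX.envier_unique hv h h2]

lemma Solid.linear (hv : ValidInstance M v) (hX : Solid M v X) {a b k : V}
    (h : Anc v X a k) (h' : Anc v X b k) : Anc v X a b ∨ Anc v X b a := by
  induction h' with
  | refl => exact Or.inl h
  | @tail c d h1 h2 ih =>
    by_cases had : a = d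
    · subst had; exact Or.inr (h1.tail h2)
    · exact ih (hX.anc_of_envies hv h2 h had)

lemma Solid.child_unique (hv : ValidInstance M v) (hX : Solid M v X) {u c c' k : V}
    (h1 : Envies v X u c) (h2 : Envies v X u c') (h3 : Anc v X c k) (h4 : Anc v X c' k) :
    c = c' := by
  obtain ⟨ρ, hρ, hρ'⟩ := hX.anc_rank
  by_contra hne
  rcases hX.linear hv h3 h4 with h | h
  · have := hρ' _ _ (hX.anc_of_envies hv h2 h hne)
    have := hρ _ _ h1
    omega
  · have := hρ' _ _ (hX.anc_of_envies hv h1 h (Ne.symm hne))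
    have := hρ _ _ h2
    omega

lemma Solid.root (hX : Solid M v X) (k : V) : ∃ r, Un v X r ∧ Anc v X r k := by
  classical
  obtain ⟨ρ, hρ⟩ := hX.rank
  obtain ⟨r, hr, hmax⟩ := Finset.exists_max_image (univ.filter (fun r => Anc v X r k)) ρ
    ⟨k, by simp [Anc.refl]⟩
  simp only [mem_filter, mem_univ, true_and] at hr hmax
  refine ⟨r, ?_, hr⟩
  intro p hp
  have := hmax p (hr.head hp)
  have := hρ _ _ hp
  omega

/-- Shift bundles up the envy path ending in `k`, and hand `B` to `k`. -/
lemma reassign_exists (hv : ValidInstance M v) (hX : Solid M v X) (k : V) (B : Finset (Sym2 V)) :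
    ∃ Y : V → Finset (Sym2 V), Y k = B ∧
      (∀ u c, Envies v X u c → Anc v X c k → Y u = X c) ∧
      (∀ u, ¬ Anc v X u k → Y u = X u \ B) := by
  classical
  obtain ⟨ρ, hρ, hρ'⟩ := hX.anc_rank
  refine ⟨fun u => if u = k then B else if h : ∃ c, Envies v X u c ∧ Anc v X c k then X h.choose
    else X u \ B, by simp, ?_, ?_⟩
  · intro u c h1 h2
    have hne : u ≠ k := by
      rintro rfl
      have := hρ _ _ h1
      have := hρ' _ _ h2
      omega
    have hex : ∃ c, Envies v X u c ∧ Anc v X c k := ⟨c, h1, h2⟩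
    simp only [hne, if_false, hex, dif_pos]
    rw [hX.child_unique hv h1 hex.choose_spec.1 h2 hex.choose_spec.2]
  · intro u hu
    have hne : u ≠ k := by
      rintro rfl
      exact hu (Anc.refl _)
    have hex : ¬ ∃ c, Envies v X u c ∧ Anc v X c k := by
      rintro ⟨c, h1, h2⟩
      exact hu (h2.head h1)
    simp only [hne, if_false, hex, dif_neg, not_false_eq_true]

lemma reassign (hv : ValidInstance M v) (hX : Solid M v X) {k p : V} {B : Finset (Sym2 V)}
    (hp : Envies v X p k)
    (h1 : ∀ e ∈ B, Gd M v k e)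
    (h2 : ∀ e ∈ B, ∀ u, e ∈ X u → Un v X u)
    (h3 : ∀ u, ¬ Anc v X u k → ∀ e, Gd M v u e →
      v u {e} ≤ v u (X u \ B) ∨ ∃ j, Envies v X u j ∧ X j = {e})
    (h4 : ∀ e, Gd M v k e → e ∉ X k → v k {e} ≤ v k B ∨ ∃ j, ¬ Anc v X j k ∧ X j = {e} ∧ e ∉ B) :
    ∃ Y : V → Finset (Sym2 V), Solid M v Y ∧ Y k = B ∧
      (∀ u c, Envies v X u c → Anc v X c k → Y u = X c) ∧
      (∀ u, ¬ Anc v X u k → Y u = X u \ B) ∧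
      Un v Y k ∧
      (∀ u w, u ≠ k → Envies v Y u w → Envies v X u w ∧ ¬ Anc v X w k) := by
  classical
  obtain ⟨ρ, hρ, hρ'⟩ := hX.anc_rank
  obtain ⟨Y, ya, yb, yc⟩ := reassign_exists hv hX k B
  -- cases for an agent
  have tri : ∀ u, u = k ∨ (∃ c, Envies v X u c ∧ Anc v X c k) ∨ ¬ Anc v X u k := by
    intro u
    by_cases hu : Anc v X u k
    · rcases hu.cases with h | h
      · exact Or.inl h
      · exact Or.inr (Or.inl h)
    · exact Or.inr (Or.inr hu)
  -- an envied single bundle off the path survives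
  have surv : ∀ u j e, Envies v X u j → X j = {e} → ¬ Anc v X j k → Y j = {e} := by
    intro u j e hu hj hA
    rw [yc j hA, hj]
    have : e ∉ B := fun he => h2 e he j (by simp [hj]) u hu
    simpa using this
  have good : ∀ u, ∀ e ∈ Y u, Gd M v u e := by
    intro u e he
    rcases tri u with rfl | ⟨c, hc1, hc2⟩ | hu
    · exact h1 e (ya ▸ he)
    · rw [yb u c hc1 hc2] at he
      obtain ⟨_, hs, hg⟩ := hX.envy_single hv hc1
      rw [hs, mem_singleton] at he
      rwa [he]
    · rw [yc u hu] at he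
      exact hX.good u e (mem_sdiff.1 he).1
  have disj : ∀ e u w, e ∈ Y u → e ∈ Y w → u = w := by
    intro e u w hu hw
    rcases tri u with rfl | ⟨c, hc1, hc2⟩ | hu'
    · rcases tri w with rfl | ⟨c', hc1', hc2'⟩ | hw'
      · rfl
      · rw [ya] at hu
        rw [yb w c' hc1' hc2'] at hw
        exact absurd hc1' (h2 e hu c' hw w)
      · rw [ya] at hu
        rw [yc w hw'] at hw
        exact absurd hu (mem_sdiff.1 hw).2
    · rw [yb u c hc1 hc2] at hu
      rcases tri w with rfl | ⟨c', hc1', hc2'⟩ | hw'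
      · rw [ya] at hw
        exact absurd hc1 (h2 e hw c hu u)
      · rw [yb w c' hc1' hc2'] at hw
        have := hX.disj e c c' hu hw
        subst this
        exact hX.envier_unique hv hc1 hc1'
      · rw [yc w hw'] at hw
        have := hX.disj e c w hu (mem_sdiff.1 hw).1
        subst this
        exact absurd hc2 hw'
    · rw [yc u hu'] at hu
      rcases tri w with rfl | ⟨c', hc1', hc2'⟩ | hw'
      · rw [ya] at hw
        exact absurd hw (mem_sdiff.1 hu).2
      · rw [yb w c' hc1' hc2'] at hw
        have := hX.disj e c' u hw (mem_sdiff.1 hu).1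
        subst this
        exact absurd hc2' hu'
      · rw [yc w hw'] at hw
        exact hX.disj e u w (mem_sdiff.1 hu).1 (mem_sdiff.1 hw).1
  -- content statement for agents other than k
  have cont : ∀ u, u ≠ k → ∀ e, Gd M v u e → v u {e} ≤ v u (Y u) ∨
      ∃ j, Envies v X u j ∧ ¬ Anc v X j k ∧ X j = {e} ∧ Y j = {e} := by
    intro u huk e hg
    rcases tri u with rfl | ⟨c, hc1, hc2⟩ | hu'
    · exact absurd rfl huk
    · by_cases hle : v u {e} ≤ v u (X u)
      · left
        rw [yb u c hc1 hc2]
        unfold Envies at hc1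
        linarith
      · obtain ⟨j, hj1, hj2⟩ := hX.envy_of_lt hg (not_le.1 hle)
        by_cases hA : Anc v X j k
        · left
          rw [yb u j hj2 hA, hj1]
        · exact Or.inr ⟨j, hj2, hA, hj1, surv u j e hj2 hj1 hA⟩
    · rcases h3 u hu' e hg with h | ⟨j, hj1, hj2⟩
      · left
        rwa [yc u hu']
      · have hA : ¬ Anc v X j k := fun hA => hu' (hA.head hj1)
        exact Or.inr ⟨j, hj1, hA, hj2, surv u j e hj1 hj2 hA⟩
  have pre : PreSolid M v Y := by
    refine ⟨good, disj, ?_⟩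
    intro u e hg
    by_cases huk : u = k
    · subst huk
      obtain ⟨hne, hs, _⟩ := hX.envy_single hv hp
      by_cases he : e ∈ X u
      · right
        refine ⟨p, hne, ?_⟩
        rw [yb p u hp (Anc.refl _), hs]
        rw [hs, mem_singleton] at he
        rw [he]
      · rcases h4 e hg he with h | ⟨j, hj1, hj2, hj3⟩
        · left
          rwa [ya]
        · right
          refine ⟨j, ?_, ?_⟩
          · rintro rfl
            exact hj1 (Anc.refl _)
          · rw [yc j hj1, hj2]
            simpa using hj3
    · rcases cont u huk e hg with h | ⟨j, hj1, hj2, hj3, hj4⟩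
      · exact Or.inl h
      · exact Or.inr ⟨j, by rintro rfl; exact lt_irrefl _ hj1, hj4⟩
  have env : ∀ u w, u ≠ k → Envies v Y u w → Envies v X u w ∧ ¬ Anc v X w k := by
    intro u w huk h
    obtain ⟨hne, hs, hg⟩ := pre.envy_single hv h
    rcases cont u huk _ hg with h' | ⟨j, hj1, hj2, hj3, hj4⟩
    · unfold Envies at h
      rw [hs] at h
      linarith
    · have : j = w := disj s(u, w) j w (by simp [hj4]) (by simp [hs])
      subst this
      exact ⟨hj1, hj2⟩
  have unk : Un v Y k := by
    intro u h
    have hne : u ≠ k := by rintro rfl; exact lt_irrefl _ h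
    exact (env u k hne h).2 (Anc.refl _)
  refine ⟨Y, ⟨pre, ?_⟩, ya, yb, yc, unk, env⟩
  refine ⟨fun u => if u = k then univ.sup ρ + 1 else ρ u, ?_⟩
  intro u w h
  have hwk : w ≠ k := by
    rintro rfl
    exact unk u h
  by_cases huk : u = k
  · have : ρ w ≤ univ.sup ρ := Finset.le_sup (mem_univ w)
    simp only [hwk, huk, if_true, if_false]
    omega
  · simp only [hwk, huk, if_false]
    exact hρ _ _ (env u w huk h).1

lemma Solid.not_anc (hX : Solid M v X) {k j : V} (h : Envies v X k j) : ¬ Anc v X j k := by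
  obtain ⟨ρ, hρ, hρ'⟩ := hX.anc_rank
  intro h'
  have := hρ _ _ h
  have := hρ' _ _ h'
  omega

open Classical in
/-- The goods of `k` in `S`. -/
noncomputable def part (M : Finset (Sym2 V)) (v : V → Finset (Sym2 V) → ℝ) (k : V)
    (S : Finset (Sym2 V)) : Finset (Sym2 V) := S.filter (fun e => Gd M v k e)

open Classical in
/-- The non-goods of `k` in `S`. -/
noncomputable def npart (M : Finset (Sym2 V)) (v : V → Finset (Sym2 V) → ℝ) (k : V)
    (S : Finset (Sym2 V)) : Finset (Sym2 V) := S.filter (fun e => ¬ Gd M v k e)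

open Classical in
/-- The unallocated goods of `k`. -/
noncomputable def Us (M : Finset (Sym2 V)) (v : V → Finset (Sym2 V) → ℝ)
    (X : V → Finset (Sym2 V)) (k : V) : Finset (Sym2 V) :=
  M.filter (fun e => Gd M v k e ∧ ∀ u, e ∉ X u)

open Classical in
/-- The agents that are envied. -/
noncomputable def envd (v : V → Finset (Sym2 V) → ℝ) (X : V → Finset (Sym2 V)) : Finset V :=
  univ.filter (fun k => ¬ Un v X k)

lemma mem_part {k : V} {S : Finset (Sym2 V)} {e : Sym2 V} :
    e ∈ part M v k S ↔ e ∈ S ∧ Gd M v k e := by simp [part]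
lemma mem_npart {k : V} {S : Finset (Sym2 V)} {e : Sym2 V} :
    e ∈ npart M v k S ↔ e ∈ S ∧ ¬ Gd M v k e := by simp [npart]
lemma mem_Us {k : V} {e : Sym2 V} :
    e ∈ Us M v X k ↔ Gd M v k e ∧ ∀ u, e ∉ X u := by
  simp only [Us, mem_filter]
  exact ⟨fun h => h.2, fun h => ⟨h.1.1, h⟩⟩
lemma mem_envd {k : V} : k ∈ envd v X ↔ ¬ Un v X k := by simp [envd]

/-- Taking the goods of `k` away from `r` does no harm. -/
def NC (M : Finset (Sym2 V)) (v : V → Finset (Sym2 V) → ℝ)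
    (X : V → Finset (Sym2 V)) (r k : V) : Prop :=
  ∀ e, Gd M v r e → v r {e} ≤ v r (npart M v k (X r)) ∨ ∃ j, Envies v X r j ∧ X j = {e}

/-- `r` is a possible parking place for goods of `k`. -/
def OKr (M : Finset (Sym2 V)) (v : V → Finset (Sym2 V) → ℝ)
    (X : V → Finset (Sym2 V)) (r k : V) : Prop :=
  Un v X r ∧ (Anc v X r k ∨ NC M v X r k)

/-- No envied agent would like to switch. -/
def Tight (M : Finset (Sym2 V)) (v : V → Finset (Sym2 V) → ℝ)
    (X : V → Finset (Sym2 V)) : Prop :=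
  ∀ k r, ¬ Un v X k → OKr M v X r k → v k (Us M v X k ∪ part M v k (X r)) ≤ v k (X k)

/-- There is a universal parking place. -/
def Free (M : Finset (Sym2 V)) (v : V → Finset (Sym2 V) → ℝ)
    (X : V → Finset (Sym2 V)) : Prop :=
  ∃ d, Un v X d ∧ ∀ k, ¬ Un v X k → NC M v X d k

lemma PreSolid.nc_of (hX : PreSolid M v X) {r k : V} (h : ∀ e ∈ X r, ¬ Gd M v k e) :
    NC M v X r k := by
  intro e he
  have : npart M v k (X r) = X r := by
    ext e
    rw [mem_npart]
    exact ⟨fun h => h.1, fun h' => ⟨h', h e h'⟩⟩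
  rw [this]
  by_cases hle : v r {e} ≤ v r (X r)
  · exact Or.inl hle
  · obtain ⟨j, h1, h2⟩ := hX.envy_of_lt he (not_le.1 hle)
    exact Or.inr ⟨j, h2, h1⟩

lemma PreSolid.free_of (hv : ValidInstance M v) (hX : PreSolid M v X) {d q : V}
    (hd : Un v X d) (hq : Un v X q) (h : X d = {s(d, q)}) : Free M v X := by
  refine ⟨d, hd, fun k hk => hX.nc_of ?_⟩
  intro e he hg
  rw [h, mem_singleton] at he
  subst he
  rcases Sym2.mem_iff.1 (hg.inc hv) with rfl | rfl
  · exact hk hd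
  · exact hk hq

lemma step (hv : ValidInstance M v) (hX : Solid M v X) {k r : V} (hk : ¬ Un v X k)
    (hr : OKr M v X r k) (hlt : v k (X k) < v k (Us M v X k ∪ part M v k (X r))) :
    ∃ Y : V → Finset (Sym2 V), Solid M v Y ∧ Free M v Y ∧ (envd v Y).card < (envd v X).card := by
  obtain ⟨p, hp⟩ := not_un hk
  set B := Us M v X k ∪ part M v k (X r) with hB
  have h1 : ∀ e ∈ B, Gd M v k e := by
    intro e he
    rcases mem_union.1 he with he | he
    · exact (mem_Us.1 he).1
    · exact (mem_part.1 he).2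
  have hBr : ∀ e ∈ B, ∀ u, e ∈ X u → u = r := by
    intro e he u hu
    rcases mem_union.1 he with he | he
    · exact absurd hu ((mem_Us.1 he).2 u)
    · exact hX.disj e u r hu (mem_part.1 he).1
  have h2 : ∀ e ∈ B, ∀ u, e ∈ X u → Un v X u := by
    intro e he u hu
    rw [hBr e he u hu]
    exact hr.1
  have h3 : ∀ u, ¬ Anc v X u k → ∀ e, Gd M v u e →
      v u {e} ≤ v u (X u \ B) ∨ ∃ j, Envies v X u j ∧ X j = {e} := by
    intro u hu e hg
    by_cases hur : u = r
    · subst hur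
      have : X u \ B = npart M v k (X u) := by
        ext e
        rw [mem_sdiff, mem_npart]
        constructor
        · rintro ⟨h, h'⟩
          exact ⟨h, fun hg => h' (mem_union_right _ (mem_part.2 ⟨h, hg⟩))⟩
        · rintro ⟨h, h'⟩
          exact ⟨h, fun hg => h' (h1 e hg)⟩
      rw [this]
      rcases hr.2 with h | h
      · exact absurd h hu
      · exact h e hg
    · have : X u \ B = X u := by
        ext e
        rw [mem_sdiff]
        exact ⟨fun h => h.1, fun h => ⟨h, fun h' => hur (hBr e h' u h)⟩⟩
      rw [this]
      by_cases hle : v u {e} ≤ v u (X u)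
      · exact Or.inl hle
      · obtain ⟨j, h1, h2⟩ := hX.envy_of_lt hg (not_le.1 hle)
        exact Or.inr ⟨j, h2, h1⟩
  have hBM : B ⊆ M := fun e he => (h1 e he).1
  have eB : ∀ e ∈ B, v k {e} ≤ v k B := by
    intro e he
    exact val_up hv (by simpa using he) hBM (fun e' he' _ => (h1 e' he').not_ch)
  have h4 : ∀ e, Gd M v k e → e ∉ X k → v k {e} ≤ v k B ∨
      ∃ j, ¬ Anc v X j k ∧ X j = {e} ∧ e ∉ B := by
    intro e hg _
    by_cases heB : e ∈ B
    · exact Or.inl (eB e heB)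
    · by_cases hle : v k {e} ≤ v k (X k)
      · left; linarith
      · obtain ⟨j, hj1, hj2⟩ := hX.envy_of_lt hg (not_le.1 hle)
        exact Or.inr ⟨j, hX.not_anc hj2, hj1, heB⟩
  obtain ⟨Y, hY, ya, yb, yc, yun, yenv⟩ := reassign hv hX hp h1 h2 h3 h4
  have yenv' : ∀ u w, Envies v Y u w → Envies v X u w ∧ ¬ Anc v X w k := by
    intro u w h
    by_cases huk : u = k
    · subst huk
      obtain ⟨_, hs, hg⟩ := hY.envy_single hv h
      have hgt : v u (X u) < v u {s(u, w)} := by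
        unfold Envies at h
        rw [ya, hs] at h
        linarith
      obtain ⟨j, hj1, hj2⟩ := hX.envy_of_lt hg hgt
      have hA := hX.not_anc hj2
      have hjY : Y j = {s(u, w)} := by
        rw [yc j hA, hj1]
        have : s(u, w) ∉ B := fun he => h2 _ he j (by simp [hj1]) u hj2
        simpa using this
      have : j = w := hY.disj s(u, w) j w (by simp [hjY]) (by simp [hs])
      subst this
      exact ⟨hj2, hA⟩
    · exact yenv u w huk h
  refine ⟨Y, hY, ?_, ?_⟩
  · obtain ⟨_, hs, _⟩ := hX.envy_single hv hp
    refine hY.free_of hv (d := p) (q := k) ?_ yun ?_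
    · intro u hu
      exact (yenv' u p hu).2 ((Anc.refl k).head hp)
    · rw [yb p k hp (Anc.refl k), hs]
  · apply Finset.card_lt_card
    rw [Finset.ssubset_iff_of_subset]
    · exact ⟨k, mem_envd.2 hk, fun h => mem_envd.1 h yun⟩
    · intro w hw
      obtain ⟨u, hu⟩ := not_un (mem_envd.1 hw)
      exact mem_envd.2 (fun h => h u (yenv' u w hu).1)

/-- The desired conclusion. -/
def Done (M : Finset (Sym2 V)) (v : V → Finset (Sym2 V) → ℝ) : Prop :=
  ∃ X : V → Finset (Sym2 V), IsAllocation M X ∧ CondEnviedWeak v X ∧ CondOwnStrict v X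

/-- `g` is a suitable receiver of the unallocated item `e`. -/
def Recv (M : Finset (Sym2 V)) (v : V → Finset (Sym2 V) → ℝ)
    (X : V → Finset (Sym2 V)) (g : V) (e : Sym2 V) : Prop :=
  (Un v X g ∧ Gd M v g e) ∨
  (Un v X g ∧ ¬ Ch M v g e ∧ ∀ k, Gd M v k e → ¬ Un v X k ∧ OKr M v X g k) ∨
  (∃ ρ, Envies v X ρ g ∧ Ch M v ρ e ∧ ∀ k, Gd M v k e → ¬ Un v X k)

/-- Every contested unallocated item has a common parking place. -/
def CFree (M : Finset (Sym2 V)) (v : V → Finset (Sym2 V) → ℝ)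
    (X : V → Finset (Sym2 V)) : Prop :=
  ∀ e i j, (∀ u, e ∉ X u) → i ≠ j → Gd M v i e → Gd M v j e → ¬ Un v X i → ¬ Un v X j →
    ∃ r, OKr M v X r i ∧ OKr M v X r j

lemma recv_exists (hv : ValidInstance M v) (hX : Solid M v X) (hcard : 3 ≤ Fintype.card V)
    (hcf : CFree M v X) {e : Sym2 V} (hun : ∀ u, e ∉ X u) : ∃ g, Recv M v X g e := by
  by_cases hA : ∃ g, Un v X g ∧ Gd M v g e
  · obtain ⟨g, hg⟩ := hA
    exact ⟨g, Or.inl hg⟩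
  have hA' : ∀ k, Gd M v k e → ¬ Un v X k := fun k hk hu => hA ⟨k, hu, hk⟩
  by_cases hB : ∃ i j, i ≠ j ∧ Gd M v i e ∧ Gd M v j e
  · obtain ⟨i, j, hij, hi, hj⟩ := hB
    obtain ⟨r, hri, hrj⟩ := hcf e i j hun hij hi hj (hA' i hi) (hA' j hj)
    have hee := two_ends hij (hi.inc hv) (hj.inc hv)
    refine ⟨r, Or.inr (Or.inl ⟨hri.1, ?_, ?_⟩)⟩
    · intro hc
      have := hc.inc hv
      rw [hee, Sym2.mem_iff] at this
      rcases this with rfl | rfl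
      · exact hA' _ hi hri.1
      · exact hA' _ hj hri.1
    · intro k hk
      have := hk.inc hv
      rw [hee, Sym2.mem_iff] at this
      rcases this with rfl | rfl
      · exact ⟨hA' _ hi, hri⟩
      · exact ⟨hA' _ hj, hrj⟩
  by_cases hC : ∃ x, Gd M v x e
  · obtain ⟨x, hx⟩ := hC
    obtain ⟨r, hr, hrx⟩ := hX.root x
    by_cases hc : Ch M v r e
    · rcases hrx.cases with h | ⟨c, hc1, _⟩
      · subst h
        exact absurd hr (hA' _ hx)
      · exact ⟨c, Or.inr (Or.inr ⟨r, hc1, hc, hA'⟩)⟩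
    · refine ⟨r, Or.inr (Or.inl ⟨hr, hc, ?_⟩)⟩
      intro k hk
      have : k = x := by
        by_contra hne
        exact hB ⟨k, x, hne, hk, hx⟩
      subst this
      exact ⟨hA' _ hk, hr, Or.inl hrx⟩
  by_cases hD : ∃ ρ g, Envies v X ρ g ∧ Ch M v ρ e
  · obtain ⟨ρ, g, h1, h2⟩ := hD
    exact ⟨g, Or.inr (Or.inr ⟨ρ, h1, h2, hA'⟩)⟩
  by_cases hE : ∃ g, Un v X g ∧ ¬ Ch M v g e
  · obtain ⟨g, h1, h2⟩ := hE
    exact ⟨g, Or.inr (Or.inl ⟨h1, h2, fun k hk => absurd ⟨k, hk⟩ hC⟩)⟩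
  exfalso
  have hall : ∀ k, k ∈ e := by
    intro k
    obtain ⟨r, hr, hrk⟩ := hX.root k
    have hch : Ch M v r e := by
      by_contra hch
      exact hE ⟨r, hr, hch⟩
    rcases hrk.cases with h | ⟨c, hc1, _⟩
    · subst h
      exact hch.inc hv
    · exact absurd ⟨r, c, hc1, hch⟩ hD
  induction e using Sym2.ind with
  | _ a b =>
    have hsub : (univ : Finset V) ⊆ {a, b} := by
      intro k _
      have := Sym2.mem_iff.1 (hall k)
      simpa using this
    have h1 := Finset.card_le_card hsub
    have h2 : ({a, b} : Finset V).card ≤ 2 := Finset.card_le_two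
    rw [Finset.card_univ] at h1
    omega

lemma final (hv : ValidInstance M v) (hX : Solid M v X) (hcard : 3 ≤ Fintype.card V)
    (hT : Tight M v X) (hcf : CFree M v X) : Done M v := by
  classical
  have hex : ∀ e, ∃ g, (∀ u, e ∉ X u) → Recv M v X g e := by
    intro e
    by_cases h : ∀ u, e ∉ X u
    · obtain ⟨g, hg⟩ := recv_exists hv hX hcard hcf h
      exact ⟨g, fun _ => hg⟩
    · have : Nonempty V := Fintype.card_pos_iff.1 (by omega)
      exact ⟨Classical.arbitrary V, fun h' => absurd h' h⟩
  choose ψ hψ using hex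
  obtain ⟨Y, hYdef⟩ : ∃ Y : V → Finset (Sym2 V), ∀ g, Y g = X g ∪
    M.filter (fun e => (∀ u, e ∉ X u) ∧ ψ e = g) := ⟨fun g => _, fun g => rfl⟩
  have memY : ∀ g e, e ∈ Y g ↔ e ∈ X g ∨ (e ∈ M ∧ (∀ u, e ∉ X u) ∧ ψ e = g) := by
    intro g e
    rw [hYdef, mem_union, mem_filter]
  have memY' : ∀ g e, e ∈ Y g → e ∉ X g → (∀ u, e ∉ X u) ∧ Recv M v X g e := by
    intro g e he hne
    rcases (memY g e).1 he with h | ⟨_, h2, h3⟩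
    · exact absurd h hne
    · exact ⟨h2, h3 ▸ hψ e h2⟩
  have XsubY : ∀ g, X g ⊆ Y g := fun g e he => (memY g e).2 (Or.inl he)
  have YM : ∀ g, Y g ⊆ M := by
    intro g e he
    rcases (memY g e).1 he with h | h
    · exact hX.sub g h
    · exact h.1
  have alloc : IsAllocation M Y := by
    refine ⟨YM, ?_⟩
    intro e he
    by_cases hu : ∀ u, e ∉ X u
    · refine ⟨ψ e, (memY _ e).2 (Or.inr ⟨he, hu, rfl⟩), ?_⟩
      intro w hw
      rcases (memY _ e).1 hw with h | ⟨_, _, h⟩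
      · exact absurd h (hu w)
      · exact h.symm
    · push Not at hu
      obtain ⟨u, hu⟩ := hu
      refine ⟨u, XsubY u hu, ?_⟩
      intro w hw
      rcases (memY _ e).1 hw with h | ⟨_, h, _⟩
      · exact hX.disj e w u h hu
      · exact absurd hu (h u)
  have noCh : ∀ k, ∀ e ∈ Y k, ¬ Ch M v k e := by
    intro k e he
    by_cases hx : e ∈ X k
    · exact (hX.good k e hx).not_ch
    · obtain ⟨hun, h | h | ⟨ρ, h1, h2, _⟩⟩ := memY' k e he hx
      · exact h.2.not_ch
      · exact h.2.1
      · intro hc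
        obtain ⟨hne, hs, _⟩ := hX.envy_single hv h1
        have := two_ends hne (h2.inc hv) (hc.inc hv)
        exact hx (by rw [hs, this]; simp)
  have own : ∀ k, v k (X k) ≤ v k (Y k) := fun k =>
    val_up hv (XsubY k) (YM k) (fun e he _ => noCh k e he)
  have emp : ∀ k, v k ∅ ≤ v k (X k) := fun k =>
    val_up hv (empty_subset _) (hX.sub k) (fun e he _ => (hX.good k e he).not_ch)
  have toPart : ∀ k g, v k (Y g) ≤ v k (part M v k (Y g)) := by
    intro k g
    exact val_dn hv (fun e he => (mem_part.1 he).1) (YM g)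
      (fun e he hne hg => hne (mem_part.2 ⟨he, hg⟩))
  have up : ∀ k (S W : Finset (Sym2 V)), S ⊆ W → (∀ e ∈ W, Gd M v k e) → v k S ≤ v k W := by
    intro k S W hSW hW
    exact val_up hv hSW (fun e he => (hW e he).1) (fun e he _ => (hW e he).not_ch)
  have goodB : ∀ k r, ∀ e ∈ Us M v X k ∪ part M v k (X r), Gd M v k e := by
    intro k r e he
    rcases mem_union.1 he with he | he
    · exact (mem_Us.1 he).1
    · exact (mem_part.1 he).2
  have claim : ∀ k g, k ≠ g → v k (Y g) ≤ v k (X k) ∨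
      (Envies v X k g ∧ ∀ e ∈ Y g, e ∉ X g → Ch M v k e) := by
    intro k g hkg
    by_cases hg : Un v X g
    · left
      refine (toPart k g).trans ?_
      by_cases hok : ¬ Un v X k ∧ OKr M v X g k
      · refine le_trans ?_ (hT k g hok.1 hok.2)
        apply up k _ _ _ (goodB k g)
        intro e he
        obtain ⟨he1, he2⟩ := mem_part.1 he
        by_cases hx : e ∈ X g
        · exact mem_union_right _ (mem_part.2 ⟨hx, he2⟩)
        · exact mem_union_left _ (mem_Us.2 ⟨he2, (memY' g e he1 hx).1⟩)
      · have hsub : ∀ e ∈ part M v k (Y g), e = s(k, g) := by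
          intro e he
          obtain ⟨he1, he2⟩ := mem_part.1 he
          by_cases hx : e ∈ X g
          · exact two_ends hkg (he2.inc hv) ((hX.good g e hx).inc hv)
          · obtain ⟨hun, h | h | ⟨ρ, h1, _⟩⟩ := memY' g e he1 hx
            · exact two_ends hkg (he2.inc hv) (h.2.inc hv)
            · exact absurd (h.2.2 k he2) hok
            · exact absurd h1 (hg ρ)
        by_cases hgd : Gd M v k s(k, g)
        · have h1 : v k (part M v k (Y g)) ≤ v k {s(k, g)} := by
            apply up
            · intro e he
              simpa using hsub e he
            · intro e he
              rw [mem_singleton] at he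
              rwa [he]
          refine h1.trans ?_
          by_contra hlt
          obtain ⟨j, hj1, hj2⟩ := hX.envy_of_lt hgd (not_le.1 hlt)
          have hj := (hX.good j s(k, g) (by simp [hj1])).inc hv
          rcases Sym2.mem_iff.1 hj with rfl | rfl
          · exact lt_irrefl _ hj2
          · exact hg _ hj2
        · have : part M v k (Y g) = ∅ := by
            rw [Finset.eq_empty_iff_forall_notMem]
            intro e he
            have h1 := hsub e he
            exact hgd (h1 ▸ (mem_part.1 he).2)
          rw [this]
          exact emp k
    · obtain ⟨ρ, hρ⟩ := not_un hg
      have hS3 : ∀ e ∈ Y g, e ∉ X g → (∀ u, e ∉ X u) ∧ Ch M v ρ e ∧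
          ∀ k, Gd M v k e → ¬ Un v X k := by
        intro e he hx
        obtain ⟨hun, h | h | ⟨ρ', h1, h2, h3⟩⟩ := memY' g e he hx
        · exact absurd h.1 hg
        · exact absurd h.1 hg
        · rw [hX.envier_unique hv hρ h1]
          exact ⟨hun, h2, h3⟩
      obtain ⟨hne, hs, _⟩ := hX.envy_single hv hρ
      by_cases hk : k = ρ
      · subst hk
        exact Or.inr ⟨hρ, fun e he hx => (hS3 e he hx).2.1⟩
      · left
        refine (toPart k g).trans ?_
        have hpart : ∀ e ∈ part M v k (Y g), (∀ u, e ∉ X u) ∧ Gd M v k e ∧ ¬ Un v X k := by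
          intro e he
          obtain ⟨he1, he2⟩ := mem_part.1 he
          by_cases hx : e ∈ X g
          · rw [hs, mem_singleton] at hx
            have := he2.inc hv
            rw [hx, Sym2.mem_iff] at this
            rcases this with h | h
            · exact absurd h hk
            · exact absurd h hkg
          · obtain ⟨h1, h2, h3⟩ := hS3 e he1 hx
            exact ⟨h1, he2, h3 k he2⟩
        by_cases huk : Un v X k
        · have : part M v k (Y g) = ∅ := by
            rw [Finset.eq_empty_iff_forall_notMem]
            intro e he
            exact (hpart e he).2.2 huk
          rw [this]
          exact emp k
        · obtain ⟨r, hr, hrk⟩ := hX.root k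
          refine le_trans ?_ (hT k r huk ⟨hr, Or.inl hrk⟩)
          apply up k _ _ _ (goodB k r)
          intro e he
          exact mem_union_left _ (mem_Us.2 ⟨(hpart e he).2.1, (hpart e he).1⟩)
  refine ⟨Y, alloc, ?_, ?_⟩
  · intro i j hij e he hle
    have hne : i ≠ j := by rintro rfl; exact lt_irrefl _ hij
    unfold Envies at hij
    have := own i
    rcases claim i j hne with h | ⟨h, hch⟩
    · linarith
    · obtain ⟨_, hs, _⟩ := hX.envy_single hv h
      by_cases hx : e ∈ X j
      · have h1 : v i ((Y j).erase e) ≤ v i ∅ := by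
          apply val_dn hv (empty_subset _) (fun e' he' => YM j (mem_of_mem_erase he'))
          intro e' he' _ hg
          have h2 : e' ∉ X j := by
            intro h2
            rw [hs, mem_singleton] at h2 hx
            exact (mem_erase.1 he').1 (h2.trans hx.symm)
          exact hg.not_ch (hch e' (mem_of_mem_erase he') h2)
        linarith [emp i]
      · have h1 := (hch e he hx).2 ((Y j).erase e)
          (fun e' he' => mem_erase.2 ⟨(mem_erase.1 he').1, YM j (mem_of_mem_erase he')⟩)
        rw [insert_erase he] at h1
        linarith
  · intro i j _ e he hlt
    exfalso
    have : v i ((Y i).erase e) ≤ v i (Y i) :=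
      val_up hv (erase_subset _ _) (YM i) (fun e' he' _ => noCh i e' he')
    linarith

/-- A solid free state can be completed. -/
lemma post (hv : ValidInstance M v) (hcard : 3 ≤ Fintype.card V) :
    ∀ n, ∀ X : V → Finset (Sym2 V), (envd v X).card = n → Solid M v X → Free M v X →
      Done M v := by
  intro n
  induction n using Nat.strong_induction_on with
  | _ n ih =>
    intro X hn hX hF
    by_cases hT : Tight M v X
    · apply final hv hX hcard hT
      intro e i j _ _ _ _ hi hj
      obtain ⟨d, hd, hd'⟩ := hF
      exact ⟨d, ⟨hd, Or.inr (hd' i hi)⟩, ⟨hd, Or.inr (hd' j hj)⟩⟩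
    · unfold Tight at hT
      push Not at hT
      obtain ⟨k, r, hk, hr, hlt⟩ := hT
      obtain ⟨Y, hY, hYF, hc⟩ := step hv hX hk hr hlt
      exact ih _ (hn ▸ hc) Y rfl hY hYF

lemma best_single (f : Finset (Sym2 V) → ℝ) (C : Finset (Sym2 V)) :
    ∃ B ⊆ C, B.card ≤ 1 ∧ ∀ e ∈ C, f {e} ≤ f B := by
  rcases C.eq_empty_or_nonempty with rfl | hC
  · exact ⟨∅, by simp, by simp, by simp⟩
  · obtain ⟨b, hb, hmax⟩ := Finset.exists_max_image C (fun e => f {e}) hC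
    exact ⟨{b}, by simpa using hb, by simp, hmax⟩

lemma eq_single {S : Finset (Sym2 V)} {e : Sym2 V} (h : S.card ≤ 1) (he : e ∈ S) : S = {e} := by
  ext x
  rw [mem_singleton]
  exact ⟨fun hx => Finset.card_le_one.1 h x hx e he, fun hx => hx ▸ he⟩

/-- Serial dictatorship among the agents of `S`. -/
lemma initial_aux (hv : ValidInstance M v) (S : Finset V) : ∃ X : V → Finset (Sym2 V),
    (∀ u, u ∉ S → X u = ∅) ∧ (∀ u, ∀ e ∈ X u, Gd M v u e) ∧
    (∀ e u w, e ∈ X u → e ∈ X w → u = w) ∧ (∀ u, (X u).card ≤ 1) ∧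
    (∀ u ∈ S, ∀ e, Gd M v u e → v u {e} ≤ v u (X u) ∨ ∃ j, j ≠ u ∧ X j = {e}) ∧
    ∃ ρ : V → ℕ, ∀ u ∈ S, ∀ w, Envies v X u w → ρ w < ρ u := by
  classical
  induction S using Finset.induction_on with
  | empty =>
    exact ⟨fun _ => ∅, by simp, by simp, by simp, by simp, by simp, fun _ => 0, by simp⟩
  | insert a S ha ih =>
    obtain ⟨X, hoff, hgood, hdisj, hcard, hsol, ρ, hρ⟩ := ih
    have hXM : ∀ u, X u ⊆ M := fun u e he => (hgood u e he).1
    obtain ⟨B, hBC, hB1, hBmax⟩ := best_single (v a)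
      (M.filter (fun e => Gd M v a e ∧ ∀ u, e ∉ X u))
    have hB : ∀ e ∈ B, Gd M v a e ∧ ∀ u, e ∉ X u := fun e he => (mem_filter.1 (hBC he)).2
    have hXa : X a = ∅ := hoff a ha
    obtain ⟨Y, hYa, hYo⟩ : ∃ Y : V → Finset (Sym2 V), Y a = B ∧ ∀ u, u ≠ a → Y u = X u :=
      ⟨Function.update X a B, by simp, fun u hu => by simp [hu]⟩
    have hnoenv : ∀ u ∈ S, ¬ Envies v Y u a := by
      intro u hu h
      have hua : u ≠ a := by rintro rfl; exact ha hu
      unfold Envies at h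
      rw [hYa, hYo u hua] at h
      have h0 : v u ∅ ≤ v u (X u) :=
        val_up hv (empty_subset _) (hXM u) (fun e he _ => (hgood u e he).not_ch)
      have h1 : v u B ≤ v u ∅ := by
        apply val_dn hv (empty_subset _) (fun e he => (hB e he).1.1)
        intro e he _ hg
        rw [eq_single hB1 he] at h
        rcases hsol u hu e hg with h2 | ⟨j, _, hj⟩
        · linarith
        · exact (hB e he).2 j (by simp [hj])
      linarith
    refine ⟨Y, ?_, ?_, ?_, ?_, ?_, fun u => if u = a then univ.sup ρ + 1 else ρ u, ?_⟩
    · intro u hu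
      rw [mem_insert, not_or] at hu
      rw [hYo u hu.1, hoff u hu.2]
    · intro u e he
      by_cases hua : u = a
      · subst hua
        rw [hYa] at he
        exact (hB e he).1
      · rw [hYo u hua] at he
        exact hgood u e he
    · intro e u w hu hw
      by_cases hua : u = a
      · by_cases hwa : w = a
        · rw [hua, hwa]
        · rw [hua, hYa] at hu
          rw [hYo w hwa] at hw
          exact absurd hw ((hB e hu).2 w)
      · rw [hYo u hua] at hu
        by_cases hwa : w = a
        · rw [hwa, hYa] at hw
          exact absurd hu ((hB e hw).2 u)
        · rw [hYo w hwa] at hw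
          exact hdisj e u w hu hw
    · intro u
      by_cases hua : u = a
      · rw [hua, hYa]; exact hB1
      · rw [hYo u hua]; exact hcard u
    · intro u hu e hg
      by_cases hua : u = a
      · subst hua
        by_cases hun : ∀ w, e ∉ X w
        · left
          rw [hYa]
          exact hBmax e (mem_filter.2 ⟨hg.1, hg, hun⟩)
        · push Not at hun
          obtain ⟨w, hw⟩ := hun
          have hwu : w ≠ u := by rintro rfl; simp [hXa] at hw
          exact Or.inr ⟨w, hwu, by rw [hYo w hwu]; exact eq_single (hcard w) hw⟩
      · rw [hYo u hua]
        rcases hsol u ((mem_insert.1 hu).resolve_left hua) e hg with h | ⟨j, hj, hj'⟩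
        · exact Or.inl h
        · have hja : j ≠ a := by
            rintro rfl
            rw [hXa] at hj'
            exact absurd hj'.symm (singleton_ne_empty e)
          exact Or.inr ⟨j, hj, by rw [hYo j hja, hj']⟩
    · intro u hu w h
      by_cases hua : u = a
      · have hwa : w ≠ a := by rintro rfl; rw [hua] at h; exact lt_irrefl _ h
        have : ρ w ≤ univ.sup ρ := Finset.le_sup (mem_univ w)
        simp only [hua, hwa, if_true, if_false]
        omega
      · have huS := (mem_insert.1 hu).resolve_left hua
        have hwa : w ≠ a := by rintro rfl; exact hnoenv u huS h
        simp only [hua, hwa, if_false]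
        apply hρ u huS w
        unfold Envies at h ⊢
        rwa [hYo u hua, hYo w hwa] at h

lemma initial (hv : ValidInstance M v) : ∃ X : V → Finset (Sym2 V),
    Solid M v X ∧ ∀ u, (X u).card ≤ 1 := by
  obtain ⟨X, _, h1, h2, h3, h4, ρ, h5⟩ := initial_aux hv (univ : Finset V)
  exact ⟨X, ⟨⟨h1, h2, fun u => h4 u (mem_univ u)⟩, ρ, fun u => h5 u (mem_univ u)⟩, h3⟩

lemma eject (hv : ValidInstance M v) (hX : Solid M v X) (h1X : ∀ u, (X u).card ≤ 1) {k : V}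
    (hk : ¬ Un v X k) : ∃ Y : V → Finset (Sym2 V), Solid M v Y ∧ (∀ u, (Y u).card ≤ 1) ∧
      Un v Y k ∧ (∀ u c, Envies v X u c → Anc v X c k → Y u = X c) ∧
      (∀ u, ¬ Anc v X u k → Y u = X u) ∧
      (∀ u w, u ≠ k → Envies v Y u w → Envies v X u w ∧ ¬ Anc v X w k) := by
  classical
  obtain ⟨p, hp⟩ := not_un hk
  obtain ⟨B, hBC, hB1, hBmax⟩ := best_single (v k)
    (M.filter (fun e => Gd M v k e ∧ ∀ u, e ∈ X u → Anc v X u k ∧ Un v X u))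
  have hB : ∀ e ∈ B, Gd M v k e ∧ ∀ u, e ∈ X u → Anc v X u k ∧ Un v X u :=
    fun e he => (mem_filter.1 (hBC he)).2
  have hsd : ∀ u, ¬ Anc v X u k → X u \ B = X u := by
    intro u hu
    ext e
    rw [mem_sdiff]
    exact ⟨fun h => h.1, fun h => ⟨h, fun h' => hu ((hB e h').2 u h).1⟩⟩
  obtain ⟨Y, hY, ya, yb, yc, yun, yenv⟩ := reassign hv hX (k := k) (p := p) (B := B) hp
    (fun e he => (hB e he).1) (fun e he u hu => ((hB e he).2 u hu).2)
    (by
      intro u hu e hg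
      rw [hsd u hu]
      by_cases hle : v u {e} ≤ v u (X u)
      · exact Or.inl hle
      · obtain ⟨j, h1, h2⟩ := hX.envy_of_lt hg (not_le.1 hle)
        exact Or.inr ⟨j, h2, h1⟩)
    (by
      intro e hg hek
      by_cases heC : ∀ u, e ∈ X u → Anc v X u k ∧ Un v X u
      · exact Or.inl (hBmax e (mem_filter.2 ⟨hg.1, hg, heC⟩))
      · push Not at heC
        obtain ⟨u, hu, hu'⟩ := heC
        right
        by_cases hA : Anc v X u k
        · exfalso
          obtain ⟨q, hq⟩ := not_un (hu' hA)
          obtain ⟨_, hs, _⟩ := hX.envy_single hv hq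
          have hee := hu
          rw [hs, mem_singleton] at hee
          have := hg.inc hv
          rw [hee, Sym2.mem_iff] at this
          rcases this with rfl | rfl
          · exact hX.not_anc hq hA
          · exact hek hu
        · exact ⟨u, hA, eq_single (h1X u) hu, fun h => hA ((hB e h).2 u hu).1⟩)
  have yc' : ∀ u, ¬ Anc v X u k → Y u = X u := fun u hu => (yc u hu).trans (hsd u hu)
  refine ⟨Y, hY, ?_, yun, yb, yc', yenv⟩
  intro u
  by_cases hu : Anc v X u k
  · rcases hu.cases with rfl | ⟨c, h1, h2⟩
    · rw [ya]; exact hB1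
    · rw [yb u c h1 h2]; exact h1X c
  · rw [yc' u hu]; exact h1X u

lemma stuck (hv : ValidInstance M v) (hcard : 3 ≤ Fintype.card V) (hnd : ¬ Done M v)
    (hX : Solid M v X) (h1X : ∀ u, (X u).card ≤ 1) {r : V} (hr : Un v X r) :
    ∃ i, ¬ Un v X i ∧ X r = {s(r, i)} ∧ ¬ Anc v X r i := by
  have hT : Tight M v X := by
    by_contra hT
    unfold Tight at hT
    push Not at hT
    obtain ⟨k, r, hk, hr, hlt⟩ := hT
    obtain ⟨Y, hY, hYF, _⟩ := step hv hX hk hr hlt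
    exact hnd (post hv hcard _ Y rfl hY hYF)
  have hcf : ¬ CFree M v X := fun h => hnd (final hv hX hcard hT h)
  unfold CFree at hcf
  push Not at hcf
  obtain ⟨e, i, j, hun, hij, hi, hj, hui, huj, hno⟩ := hcf
  have key : ∀ i, ¬ Un v X i → ¬ OKr M v X r i →
      ¬ Un v X i ∧ X r = {s(r, i)} ∧ ¬ Anc v X r i := by
    intro i hi hok
    refine ⟨hi, ?_, fun h => hok ⟨hr, Or.inl h⟩⟩
    have : ¬ ∀ e ∈ X r, ¬ Gd M v i e := fun h => hok ⟨hr, Or.inr (hX.nc_of h)⟩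
    push Not at this
    obtain ⟨e', he', hg⟩ := this
    have hne : r ≠ i := by rintro rfl; exact hi hr
    have := two_ends hne ((hX.good r e' he').inc hv) (hg.inc hv)
    rw [← this]
    exact eq_single (h1X r) he'
  by_cases hok : OKr M v X r i
  · exact ⟨j, key j huj (hno r hok)⟩
  · exact ⟨i, key i hui hok⟩

lemma main_large (hv : ValidInstance M v) (hcard : 3 ≤ Fintype.card V) : Done M v := by
  by_contra hnd
  obtain ⟨X, hX, h1X⟩ := initial hv
  have : Nonempty V := Fintype.card_pos_iff.1 (by omega)
  obtain ⟨r, hr, _⟩ := hX.root (Classical.arbitrary V)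
  obtain ⟨i0, hi0, _⟩ := stuck hv hcard hnd hX h1X hr
  obtain ⟨z, hz, hzi⟩ := hX.root i0
  obtain ⟨b, hzb⟩ : ∃ b, Envies v X z b := by
    rcases hzi.cases with rfl | ⟨c, hc, _⟩
    · exact absurd hz hi0
    · exact ⟨c, hc⟩
  obtain ⟨j, hj, hzj, hAzj⟩ := stuck hv hcard hnd hX h1X hz
  have hAbj : ¬ Anc v X b j := fun h => hAzj (h.head hzb)
  obtain ⟨X1, hX1, h1X1, hun1, -, hk1, he1⟩ := eject hv hX h1X hj
  have z1 := hk1 z hAzj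
  have b1 := hk1 b hAbj
  have hzb1 : Envies v X1 z b := by
    unfold Envies at hzb ⊢
    rwa [z1, b1]
  by_cases hz1 : Un v X1 z
  · exact hnd (post hv hcard _ X1 rfl hX1 (hX1.free_of hv hz1 hun1 (z1.trans hzj)))
  have hjz1 : Envies v X1 j z := by
    obtain ⟨p, hp⟩ := not_un hz1
    by_cases hpj : p = j
    · rwa [← hpj]
    · exact absurd (he1 p z hpj hp).1 (hz p)
  obtain ⟨i, hi, hji, hAji⟩ := stuck hv hcard hnd hX1 h1X1 hun1
  have hAzi : ¬ Anc v X1 z i := fun h => hAji (h.head hjz1)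
  have hAbi : ¬ Anc v X1 b i := fun h => hAzi (h.head hzb1)
  obtain ⟨X2, hX2, h1X2, hun2, -, hk2, he2⟩ := eject hv hX1 h1X1 hi
  have j2 := hk2 j hAji
  have z2 := hk2 z hAzi
  have b2 := hk2 b hAbi
  have hzb2 : Envies v X2 z b := by
    unfold Envies at hzb1 ⊢
    rwa [z2, b2]
  have hjz2 : Envies v X2 j z := by
    unfold Envies at hjz1 ⊢
    rwa [z2, j2]
  by_cases hj2 : Un v X2 j
  · exact hnd (post hv hcard _ X2 rfl hX2 (hX2.free_of hv hj2 hun2 (j2.trans hji)))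
  have hij2 : Envies v X2 i j := by
    obtain ⟨p, hp⟩ := not_un hj2
    by_cases hpi : p = i
    · rwa [← hpi]
    · exact absurd (he2 p j hpi hp).1 (hun1 p)
  have hAz : Anc v X2 z b := (Anc.refl b).head hzb2
  have hAj : Anc v X2 j b := hAz.head hjz2
  have hAi : Anc v X2 i b := hAj.head hij2
  obtain ⟨X3, hX3, h1X3, hun3, hs3, -, he3⟩ := eject hv hX2 h1X2 (k := b) (fun h => h z hzb2)
  have i3 : X3 i = {s(i, j)} := by
    rw [hs3 i j hij2 hAj, j2, hji, Sym2.eq_swap]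
  have j3 : X3 j = {s(z, j)} := by
    rw [hs3 j z hjz2 hAz, z2, z1, hzj]
  have hbz : b ≠ z := by rintro rfl; exact lt_irrefl _ hzb2
  have hbj : b ≠ j := by
    rintro rfl
    exact hX2.not_anc hzb2 ((Anc.refl _).head hjz2)
  have ui : Un v X3 i := by
    intro p hp
    by_cases hpb : p = b
    · subst hpb
      obtain ⟨hne, hs, _⟩ := hX3.envy_single hv hp
      rw [i3] at hs
      have h := Finset.singleton_injective hs
      have : p ∈ s(i, j) := by rw [h]; simp
      rcases Sym2.mem_iff.1 this with h' | h'
      · exact hne h'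
      · exact hbj h'
    · exact (he3 p i hpb hp).2 hAi
  have uj : Un v X3 j := by
    intro p hp
    by_cases hpb : p = b
    · subst hpb
      obtain ⟨hne, hs, _⟩ := hX3.envy_single hv hp
      rw [j3] at hs
      have h := Finset.singleton_injective hs
      have : p ∈ s(z, j) := by rw [h]; simp
      rcases Sym2.mem_iff.1 this with h' | h'
      · exact hbz h'
      · exact hne h'
    · exact (he3 p j hpb hp).2 hAj
  exact hnd (post hv hcard _ X3 rfl hX3 (hX3.free_of hv ui uj i3))

lemma main_small (hv : ValidInstance M v) (hcard : Fintype.card V ≤ 2) : Done M v := by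
  classical
  rcases M.eq_empty_or_nonempty with rfl | ⟨e, he⟩
  · refine ⟨fun _ => ∅, ⟨by simp, by simp⟩, ?_, ?_⟩
    · intro i j _ e he
      simp at he
    · intro i j _ e he
      simp at he
  · have hone : ∀ e' ∈ M, e' = e := by
      intro e' he'
      have hd := hv.1 e he
      have hd' := hv.1 e' he'
      induction e using Sym2.ind with
      | _ a b =>
        induction e' using Sym2.ind with
        | _ c d =>
          rw [Sym2.mk_isDiag_iff] at hd hd'
          have huniv : ({a, b} : Finset V) = univ := by
            apply Finset.eq_of_subset_of_card_le (subset_univ _)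
            rw [Finset.card_univ, Finset.card_pair hd]
            exact hcard
          have hc : c ∈ ({a, b} : Finset V) := by rw [huniv]; simp
          have hd2 : d ∈ ({a, b} : Finset V) := by rw [huniv]; simp
          simp only [mem_insert, mem_singleton] at hc hd2
          rw [Sym2.eq_iff]
          rcases hc with rfl | rfl <;> rcases hd2 with rfl | rfl <;> simp_all
    have hM : M = {e} := by
      ext x
      rw [mem_singleton]
      exact ⟨hone x, fun h => h ▸ he⟩
    obtain ⟨a⟩ : Nonempty V := by
      induction e using Sym2.ind with
      | _ a b => exact ⟨a⟩
    refine ⟨fun u => if u = a then {e} else ∅, ⟨?_, ?_⟩, ?_, ?_⟩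
    · intro i
      rw [hM]
      dsimp only
      split_ifs <;> simp
    · intro x hx
      rw [hM, mem_singleton] at hx
      subst hx
      refine ⟨a, by simp, ?_⟩
      intro w hw
      by_contra hne
      simp [hne] at hw
    · intro i j hij x hx hle
      unfold Envies at hij
      dsimp only at hij hx hle ⊢
      by_cases hja : j = a
      · subst hja
        have hi : i ≠ j := by rintro rfl; exact lt_irrefl _ hij
        simp only [if_true, mem_singleton] at hx
        subst hx
        simp [hi]
      · simp [hja] at hx
    · intro i j hij x hx hle
      unfold Envies at hij
      dsimp only at hij hx hle ⊢
      by_cases hia : i = a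
      · subst hia
        have hi : j ≠ i := by rintro rfl; exact lt_irrefl _ hij
        simp only [if_true, mem_singleton] at hx
        subst hx
        simp [hi]
      · simp [hia] at hx

end Proof

/-- For every mixed instance on a simple graph, an EFX⁰₋ allocation
always exists. -/
theorem stmt10 {V : Type*} [Fintype V] [DecidableEq V]
    (M : Finset (Sym2 V)) (v : V → Finset (Sym2 V) → ℝ)
    (hvalid : ValidInstance M v) :
    ∃ X : V → Finset (Sym2 V),
      IsAllocation M X ∧ CondEnviedWeak v X ∧ CondOwnStrict v X := by
  rcases Nat.lt_or_ge (Fintype.card V) 3 with h | h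
  · exact main_small hvalid (by omega)
  · exact main_large hvalid h
end

section
/- For every mixed instance on a simple graph, an EFX^+_0 allocation always exists. -/
open Finset

variable {V : Type*} [DecidableEq V]

section Helpers

theorem val_drop {v : Finset (Sym2 V) → ℝ} {M T U : Finset (Sym2 V)}
    (hcl : ∀ e ∈ M, IsGoodFor v M e ∨ IsChoreFor v M e ∨ IsDummyFor v M e)
    (hTU : T ⊆ U) (hU : U ⊆ M) (h : ∀ e ∈ U, e ∉ T → ¬ IsGoodFor v M e) : v U ≤ v T := by
  have key : ∀ D : Finset (Sym2 V), D ⊆ U → v (D ∪ T) ≤ v T := by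
    intro D
    induction D using Finset.induction_on with
    | empty => intro _; simp
    | insert e D heD ih =>
      intro hD
      have hD' : D ⊆ U := fun x hx => hD (Finset.mem_insert_of_mem hx)
      have heU : e ∈ U := hD (Finset.mem_insert_self _ _)
      have ih := ih hD'
      rw [Finset.insert_union]
      by_cases heT : e ∈ T
      · rwa [Finset.insert_eq_of_mem (Finset.mem_union_right _ heT)]
      · have hs : D ∪ T ⊆ M.erase e := by
          intro x hx
          have hxe : x ≠ e := by
            rintro rfl
            rcases Finset.mem_union.1 hx with h | h
            · exact heD h
            · exact heT h
          have : x ∈ U := (Finset.union_subset hD' hTU) hx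
          exact Finset.mem_erase.2 ⟨hxe, hU this⟩
        rcases hcl e (hU heU) with h1 | h1 | h1
        · exact absurd h1 (h e heU heT)
        · exact (h1 _ hs).le.trans ih
        · exact (h1 _ hs).le.trans ih
  have := key U subset_rfl
  rwa [Finset.union_eq_left.2 hTU] at this

theorem val_up_s11 {v : Finset (Sym2 V) → ℝ} {M T U : Finset (Sym2 V)}
    (hcl : ∀ e ∈ M, IsGoodFor v M e ∨ IsChoreFor v M e ∨ IsDummyFor v M e)
    (hTU : T ⊆ U) (hU : U ⊆ M) (h : ∀ e ∈ U, e ∉ T → ¬ IsChoreFor v M e) : v T ≤ v U := by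
  have key : ∀ D : Finset (Sym2 V), D ⊆ U → v T ≤ v (D ∪ T) := by
    intro D
    induction D using Finset.induction_on with
    | empty => intro _; simp
    | insert e D heD ih =>
      intro hD
      have hD' : D ⊆ U := fun x hx => hD (Finset.mem_insert_of_mem hx)
      have heU : e ∈ U := hD (Finset.mem_insert_self _ _)
      have ih := ih hD'
      rw [Finset.insert_union]
      by_cases heT : e ∈ T
      · rwa [Finset.insert_eq_of_mem (Finset.mem_union_right _ heT)]
      · have hs : D ∪ T ⊆ M.erase e := by
          intro x hx
          have hxe : x ≠ e := by
            rintro rfl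
            rcases Finset.mem_union.1 hx with h | h
            · exact heD h
            · exact heT h
          have : x ∈ U := (Finset.union_subset hD' hTU) hx
          exact Finset.mem_erase.2 ⟨hxe, hU this⟩
        rcases hcl e (hU heU) with h1 | h1 | h1
        · exact ih.trans (h1 _ hs).le
        · exact absurd h1 (h e heU heT)
        · exact ih.trans (h1 _ hs).ge
  have := key U subset_rfl
  rwa [Finset.union_eq_left.2 hTU] at this

theorem good_not_chore {v : Finset (Sym2 V) → ℝ} {M : Finset (Sym2 V)} {e : Sym2 V}
    (h : IsGoodFor v M e) : ¬ IsChoreFor v M e := fun h' =>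
  lt_asymm (h ∅ (by simp)) (h' ∅ (by simp))

theorem dummy_not_good {v : Finset (Sym2 V) → ℝ} {M : Finset (Sym2 V)} {e : Sym2 V}
    (h : IsDummyFor v M e) : ¬ IsGoodFor v M e := fun h' =>
  (h' ∅ (by simp)).ne' (h ∅ (by simp))

theorem dummy_not_chore {v : Finset (Sym2 V) → ℝ} {M : Finset (Sym2 V)} {e : Sym2 V}
    (h : IsDummyFor v M e) : ¬ IsChoreFor v M e := fun h' =>
  (h' ∅ (by simp)).ne (h ∅ (by simp))

/-- The bundle of `i` under the assignment `σ`. -/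
def bun (M : Finset (Sym2 V)) (σ : Sym2 V → V) (i : V) : Finset (Sym2 V) :=
  M.filter (fun e => σ e = i)

theorem mem_bun {M : Finset (Sym2 V)} {σ : Sym2 V → V} {i : V} {e : Sym2 V} :
    e ∈ bun M σ i ↔ e ∈ M ∧ σ e = i := by simp [bun]

theorem bun_sub {M : Finset (Sym2 V)} {σ : Sym2 V → V} {i : V} : bun M σ i ⊆ M :=
  Finset.filter_subset _ _

/-- If all goods of `i` are with `i`, and `i` values its bundle at least as the empty one,
then `i` does not envy. -/
theorem no_envy {M : Finset (Sym2 V)} {v : V → Finset (Sym2 V) → ℝ}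
    (hv : ValidInstance M v) {σ : Sym2 V → V} {i : V}
    (h0 : v i ∅ ≤ v i (bun M σ i)) (h : ∀ e ∈ M, IsGoodFor (v i) M e → σ e = i) :
    v i ∅ ≤ v i (bun M σ i) ∧ ∀ j, v i (bun M σ j) ≤ v i (bun M σ i) := by
  refine ⟨h0, fun j => ?_⟩
  by_cases hij : j = i
  · rw [hij]
  refine (val_drop (hv.2.1 i) (Finset.empty_subset _) bun_sub ?_).trans h0
  intro e he _ hg
  have := mem_bun.1 he
  exact hij (this.2.symm.trans (h e this.1 hg))

theorem own_nonneg {M : Finset (Sym2 V)} {v : V → Finset (Sym2 V) → ℝ}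
    (hv : ValidInstance M v) {σ : Sym2 V → V} {i : V}
    (h : ∀ e ∈ M, σ e = i → ¬ IsChoreFor (v i) M e) : v i ∅ ≤ v i (bun M σ i) := by
  refine val_up_s11 (hv.2.1 i) (Finset.empty_subset _) bun_sub ?_
  intro e he _
  exact h e (mem_bun.1 he).1 (mem_bun.1 he).2

theorem good_mem {M : Finset (Sym2 V)} {v : V → Finset (Sym2 V) → ℝ}
    (hv : ValidInstance M v) {i : V} {e : Sym2 V} (he : e ∈ M) (h : IsGoodFor (v i) M e) :
    i ∈ e := by
  by_contra hc
  exact dummy_not_good (hv.2.2 i e he hc) h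

theorem criterion {M : Finset (Sym2 V)} {v : V → Finset (Sym2 V) → ℝ}
    (hv : ValidInstance M v) (σ : Sym2 V → V)
    (hg : ∀ e ∈ M, ∀ i, IsGoodFor (v i) M e → IsGoodFor (v (σ e)) M e)
    (hc : ∀ i, (∀ e ∈ M, σ e = i → IsGoodFor (v i) M e) ∨
      (v i ∅ ≤ v i (bun M σ i) ∧ ∀ j, v i (bun M σ j) ≤ v i (bun M σ i)) ∨
      (∃ e0 ∈ M, σ e0 = i ∧ ¬ IsGoodFor (v i) M e0 ∧
        (∀ e ∈ M, σ e = i → e ≠ e0 → IsGoodFor (v i) M e) ∧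
        ∀ e ∈ M, IsGoodFor (v i) M e → σ e = i)) :
    ∃ X : V → Finset (Sym2 V),
      IsAllocation M X ∧ CondEnviedStrict v X ∧ CondOwnWeak v X := by
  refine ⟨bun M σ, ⟨fun i => bun_sub, fun e he => ⟨σ e, mem_bun.2 ⟨he, rfl⟩,
    fun j hj => (mem_bun.1 hj).2.symm⟩⟩, ?_, ?_⟩
  · intro i j henv e he hlt
    have hij : j ≠ i := by rintro rfl; exact lt_irrefl _ henv
    have heM := (mem_bun.1 he).1
    have hei := (mem_bun.1 he).2
    have hsub : (bun M σ j).erase e ⊆ M.erase e := Finset.erase_subset_erase _ bun_sub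
    have hgood : IsGoodFor (v i) M e := by
      rcases hv.2.1 i e heM with h | h | h
      · exact h
      · have := h _ hsub
        rw [Finset.insert_erase he] at this
        exact absurd hlt this.not_gt
      · have := h _ hsub
        rw [Finset.insert_erase he] at this
        exact absurd hlt this.le.not_gt
    have hle : v i ((bun M σ j).erase e) ≤ v i ∅ := by
      refine val_drop (hv.2.1 i) (Finset.empty_subset _)
        ((Finset.erase_subset _ _).trans bun_sub) ?_
      intro e' he' _ hg'
      have hne := (Finset.mem_erase.1 he').1
      have hb := mem_bun.1 (Finset.mem_erase.1 he').2
      apply hne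
      have h1 := hg e' hb.1 i hg'
      have h2 := hg e heM i hgood
      rw [hb.2] at h1
      rw [hei] at h2
      rw [(Sym2.mem_and_mem_iff hij).1 ⟨good_mem hv hb.1 h1, good_mem hv hb.1 hg'⟩,
        (Sym2.mem_and_mem_iff hij).1 ⟨good_mem hv heM h2, good_mem hv heM hgood⟩]
    rcases hc i with h | h | ⟨e0, _, _, _, _, h⟩
    · exact hle.trans (own_nonneg hv fun e he h' => good_not_chore (h e he h'))
    · exact hle.trans h.1
    · exact absurd (hei.symm.trans (h e heM hgood)) hij
  · intro i j henv e he hle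
    have hij : j ≠ i := by rintro rfl; exact lt_irrefl _ henv
    have heM := (mem_bun.1 he).1
    have hei := (mem_bun.1 he).2
    have hsub : (bun M σ i).erase e ⊆ M.erase e := Finset.erase_subset_erase _ bun_sub
    have hng : ¬ IsGoodFor (v i) M e := by
      intro h
      have := h _ hsub
      rw [Finset.insert_erase he] at this
      exact absurd hle this.not_ge
    rcases hc i with h | h | ⟨e0, _, _, _, h1, h2⟩
    · exact absurd (h e heM hei) hng
    · exact absurd henv (h.2 j).not_gt
    · have hee : e = e0 := by
        by_contra hne
        exact hng (h1 e heM hei hne)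
      refine le_trans (b := v i ∅) ?_ ?_
      · refine val_drop (hv.2.1 i) (Finset.empty_subset _) bun_sub ?_
        intro e' he' _ hg'
        have hb := mem_bun.1 he'
        exact hij (hb.2.symm.trans (h2 e' hb.1 hg'))
      · refine val_up_s11 (hv.2.1 i) (Finset.empty_subset _)
          ((Finset.erase_subset _ _).trans bun_sub) ?_
        intro e' he' _
        have hb := mem_bun.1 (Finset.mem_erase.1 he').2
        refine good_not_chore (h1 e' hb.1 hb.2 ?_)
        rw [← hee]
        exact (Finset.mem_erase.1 he').1

/-- Two or three relevant agents. -/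
theorem case_small {M : Finset (Sym2 V)} {v : V → Finset (Sym2 V) → ℝ}
    (hv : ValidInstance M v) (a c : V) (hac : a ≠ c) (hM : s(a, c) ∈ M)
    (hbad : ∀ i, ¬ IsGoodFor (v i) M s(a, c))
    (h : ∀ e ∈ M, e ≠ s(a, c) → ¬ IsGoodFor (v c) M e ∧ ¬ IsChoreFor (v a) M e ∧
      ∀ i, IsGoodFor (v i) M e → IsGoodFor (v a) M e) :
    ∃ X : V → Finset (Sym2 V),
      IsAllocation M X ∧ CondEnviedStrict v X ∧ CondOwnWeak v X := by
  refine criterion hv (fun e => if e = s(a, c) then c else a) ?_ ?_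
  · intro e he i hi
    by_cases hE : e = s(a, c)
    · subst hE; exact absurd hi (hbad i)
    · simp only [hE, if_false]
      exact (h e he hE).2.2 i hi
  · intro i
    by_cases hic : i = c
    · subst hic
      right; right
      refine ⟨s(a, i), hM, by simp, hbad i, ?_, ?_⟩
      · intro e he h1 h2
        simp [h2, hac] at h1
      · intro e he hg
        by_cases hE : e = s(a, i)
        · simp [hE]
        · exact absurd hg (h e he hE).1
    · by_cases hia : i = a
      · subst hia
        right; left
        apply no_envy hv
        · apply own_nonneg hv
          intro e he h1
          by_cases hE : e = s(i, c)
          · simp [hE] at h1; exact absurd h1.symm hac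
          · exact (h e he hE).2.1
        · intro e he hg
          by_cases hE : e = s(i, c)
          · subst hE; exact absurd hg (hbad i)
          · simp [hE]
      · left
        intro e he h1
        exfalso
        split_ifs at h1
        · exact hic h1.symm
        · exact hia h1.symm

/-- Agents holding dummies are in `S`; everyone in `S` gets a favourite item. -/
theorem case_big {M : Finset (Sym2 V)} {v : V → Finset (Sym2 V) → ℝ}
    (hv : ValidInstance M v) (f : V → Option (Sym2 V))
    (hf1 : ∀ i e, f i = some e → e ∈ M ∧ IsGoodFor (v i) M e ∧
      ∀ e' ∈ M, IsGoodFor (v i) M e' → v i {e'} ≤ v i {e})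
    (hf2 : ∀ i, f i = none → ∀ e ∈ M, ¬ IsGoodFor (v i) M e)
    (S : Set V) (hS : ∀ i ∈ S, ∀ j ∈ S, ∀ e, f i = some e → f j = some e → i = j)
    (hbad : ∀ e ∈ M, (∀ i, ¬ IsGoodFor (v i) M e) → ∃ k ∈ S, IsDummyFor (v k) M e) :
    ∃ X : V → Finset (Sym2 V),
      IsAllocation M X ∧ CondEnviedStrict v X ∧ CondOwnWeak v X := by
  have hex : ∀ e, ∃ k, e ∈ M → ((∀ i ∈ S, f i = some e → k = i) ∧
      (∀ i, IsGoodFor (v i) M e → IsGoodFor (v k) M e) ∧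
      (¬ IsGoodFor (v k) M e → k ∈ S ∧ IsDummyFor (v k) M e)) := by
    intro e
    by_cases heM : e ∈ M
    swap
    · exact ⟨(Quot.out e).1, fun h => absurd h heM⟩
    by_cases h1 : ∃ i ∈ S, f i = some e
    · obtain ⟨i, hi, hfi⟩ := h1
      have := (hf1 i e hfi).2.1
      exact ⟨i, fun _ => ⟨fun j hj hfj => hS i hi j hj e hfi hfj, fun _ _ => this,
        fun h => absurd this h⟩⟩
    · push Not at h1
      by_cases h2 : ∃ i, IsGoodFor (v i) M e
      · obtain ⟨i, hi⟩ := h2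
        exact ⟨i, fun _ => ⟨fun j hj hfj => absurd hfj (h1 j hj), fun _ _ => hi,
          fun h => absurd hi h⟩⟩
      · push Not at h2
        obtain ⟨k, hk, hd⟩ := hbad e heM h2
        exact ⟨k, fun _ => ⟨fun j hj hfj => absurd hfj (h1 j hj),
          fun i hi => absurd hi (h2 i), fun _ => ⟨hk, hd⟩⟩⟩
  choose σ hσ using hex
  have hnc : ∀ i, ∀ e ∈ M, σ e = i → ¬ IsChoreFor (v i) M e := by
    intro i e he hi
    subst hi
    by_cases h : IsGoodFor (v (σ e)) M e
    · exact good_not_chore h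
    · exact dummy_not_chore ((hσ e he).2.2 h).2
  refine criterion hv σ (fun e he => (hσ e he).2.1) ?_
  intro i
  by_cases hi : i ∈ S
  · right; left
    have h0 := own_nonneg hv (hnc i)
    cases hfi : f i with
    | none => exact no_envy hv h0 fun e he hg => absurd hg (hf2 i hfi e he)
    | some e0 =>
      refine ⟨h0, fun j => ?_⟩
      by_cases hij : j = i
      · rw [hij]
      obtain ⟨he0, hg0, hmax⟩ := hf1 i e0 hfi
      have hown : e0 ∈ bun M σ i := mem_bun.2 ⟨he0, (hσ e0 he0).1 i hi hfi⟩
      have h1 : v i {e0} ≤ v i (bun M σ i) := by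
        refine val_up_s11 (hv.2.1 i) (Finset.singleton_subset_iff.2 hown) bun_sub ?_
        intro e he _
        exact hnc i e (mem_bun.1 he).1 (mem_bun.1 he).2
      by_cases hex : ∃ e ∈ bun M σ j, IsGoodFor (v i) M e
      · obtain ⟨e, he, hge⟩ := hex
        have hb := mem_bun.1 he
        refine le_trans ?_ ((hmax e hb.1 hge).trans h1)
        refine val_drop (hv.2.1 i) (Finset.singleton_subset_iff.2 he) bun_sub ?_
        intro e' he' hne hg'
        have hb' := mem_bun.1 he'
        apply hne
        rw [Finset.mem_singleton]
        have h1 := (hσ e' hb'.1).2.1 i hg'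
        have h2 := (hσ e hb.1).2.1 i hge
        rw [hb'.2] at h1
        rw [hb.2] at h2
        rw [(Sym2.mem_and_mem_iff hij).1 ⟨good_mem hv hb'.1 h1, good_mem hv hb'.1 hg'⟩,
          (Sym2.mem_and_mem_iff hij).1 ⟨good_mem hv hb.1 h2, good_mem hv hb.1 hge⟩]
      · push Not at hex
        exact (val_drop (hv.2.1 i) (Finset.empty_subset _) bun_sub
          fun e he _ => hex e he).trans h0
  · left
    intro e he hs
    by_contra h
    rw [← hs] at h hi
    exact hi ((hσ e he).2.2 h).1

set_option maxHeartbeats 2000000 in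
theorem case_four {M : Finset (Sym2 V)} {v : V → Finset (Sym2 V) → ℝ}
    (hv : ValidInstance M v) (a b c d : V)
    (hab : a ≠ b) (hac : a ≠ c) (had : a ≠ d) (hbc : b ≠ c) (hbd : b ≠ d) (hcd : c ≠ d)
    (hall : ∀ e ∈ M, e = s(a, b) ∨ e = s(c, d) ∨ e = s(a, c) ∨ e = s(a, d) ∨ e = s(b, c) ∨
      e = s(b, d))
    (mab : s(a, b) ∈ M) (mcd : s(c, d) ∈ M) (mac : s(a, c) ∈ M) (mad : s(a, d) ∈ M)
    (mbc : s(b, c) ∈ M) (mbd : s(b, d) ∈ M)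
    (gab : ∀ i, IsGoodFor (v i) M s(a, b) ↔ i = a ∨ i = b)
    (gcd : ∀ i, IsGoodFor (v i) M s(c, d) ↔ i = c ∨ i = d)
    (gac : ∀ i, ¬ IsGoodFor (v i) M s(a, c))
    (gad : ∀ i, ¬ IsGoodFor (v i) M s(a, d))
    (gbc : ∀ i, ¬ IsGoodFor (v i) M s(b, c))
    (gbd : ∀ i, ¬ IsGoodFor (v i) M s(b, d)) :
    ∃ X : V → Finset (Sym2 V),
      IsAllocation M X ∧ CondEnviedStrict v X ∧ CondOwnWeak v X := by
  have nd : ∀ i, ∀ e ∈ M, i ∉ e → ¬ IsChoreFor (v i) M e := fun i e he h =>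
    dummy_not_chore (hv.2.2 i e he h)
  have cab := good_not_chore ((gab a).2 (Or.inl rfl))
  have ccd := good_not_chore ((gcd c).2 (Or.inl rfl))
  have n1 : s(a, b) ≠ s(c, d) := by simp; tauto
  have n2 : s(a, b) ≠ s(a, c) := by simp; tauto
  have n3 : s(a, b) ≠ s(a, d) := by simp; tauto
  have n4 : s(a, b) ≠ s(b, c) := by simp; tauto
  have n5 : s(a, b) ≠ s(b, d) := by simp; tauto
  have n6 : s(c, d) ≠ s(a, c) := by simp; tauto
  have n7 : s(c, d) ≠ s(a, d) := by simp; tauto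
  have n8 : s(c, d) ≠ s(b, c) := by simp; tauto
  have n9 : s(c, d) ≠ s(b, d) := by simp; tauto
  have n10 : s(a, c) ≠ s(a, d) := by simp; tauto
  have n11 : s(a, c) ≠ s(b, c) := by simp; tauto
  have n12 : s(a, c) ≠ s(b, d) := by simp; tauto
  have n13 : s(a, d) ≠ s(b, c) := by simp; tauto
  have n14 : s(a, d) ≠ s(b, d) := by simp; tauto
  have n15 : s(b, c) ≠ s(b, d) := by simp; tauto
  rcases le_total (v d {s(c, d), s(a, d)}) (v d ∅) with hd | hd
  · obtain ⟨σ, hσ⟩ : ∃ σ : Sym2 V → V, σ = fun e => if e = s(a, b) ∨ e = s(a, c) then a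
      else if e = s(b, c) then d else c := ⟨_, rfl⟩
    have s1 : σ s(a, b) = a := by simp [hσ]
    have s2 : σ s(a, c) = a := by simp [hσ]
    have s3 : σ s(b, c) = d := by simp only [hσ, n4.symm, n11.symm]; simp
    have s4 : σ s(c, d) = c := by simp only [hσ, n1.symm, n6, n8]; simp
    have s5 : σ s(a, d) = c := by simp only [hσ, n3.symm, n10.symm, n13]; simp
    have s6 : σ s(b, d) = c := by simp only [hσ, n5.symm, n12.symm, n15.symm]; simp
    clear hσ
    refine criterion hv σ ?_ ?_
    · intro e he i hi
      rcases hall e he with rfl | rfl | rfl | rfl | rfl | rfl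
      · rw [s1]; exact (gab a).2 (Or.inl rfl)
      · rw [s4]; exact (gcd c).2 (Or.inl rfl)
      · exact absurd hi (gac i)
      · exact absurd hi (gad i)
      · exact absurd hi (gbc i)
      · exact absurd hi (gbd i)
    · intro i
      by_cases hia : i = a
      · subst hia
        right; right
        refine ⟨s(i, c), mac, s2, gac i, ?_, ?_⟩
        · intro e he h1 h2
          rcases hall e he with rfl | rfl | rfl | rfl | rfl | rfl
          · exact (gab i).2 (Or.inl rfl)
          all_goals grind
        · intro e he h1
          rcases hall e he with rfl | rfl | rfl | rfl | rfl | rfl <;> grind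
      by_cases hic : i = c
      · subst hic
        right; left
        apply no_envy hv
        · apply own_nonneg hv
          intro e he h1
          rcases hall e he with rfl | rfl | rfl | rfl | rfl | rfl
          · grind
          · exact ccd
          · grind
          · exact nd _ _ he (by simp; tauto)
          · grind
          · exact nd _ _ he (by simp; tauto)
        · intro e he h1
          rcases hall e he with rfl | rfl | rfl | rfl | rfl | rfl <;> grind
      by_cases hid : i = d
      · subst hid
        right; left
        have h0 : v i ∅ ≤ v i (bun M σ i) := by
          apply own_nonneg hv
          intro e he h1
          rcases hall e he with rfl | rfl | rfl | rfl | rfl | rfl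
          · grind
          · grind
          · grind
          · grind
          · exact nd _ _ he (by simp; tauto)
          · grind
        refine ⟨h0, fun j => ?_⟩
        by_cases hji : j = i
        · rw [hji]
        refine le_trans ?_ h0
        by_cases hjc : j = c
        · subst hjc
          refine le_trans ?_ hd
          apply val_drop (hv.2.1 i) _ bun_sub
          · intro e he h1
            have hb := mem_bun.1 he
            rcases hall e hb.1 with rfl | rfl | rfl | rfl | rfl | rfl <;> grind
          · intro e he
            simp only [Finset.mem_insert, Finset.mem_singleton] at he
            rcases he with rfl | rfl
            · exact mem_bun.2 ⟨mcd, s4⟩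
            · exact mem_bun.2 ⟨mad, s5⟩
        · apply val_drop (hv.2.1 i) (Finset.empty_subset _) bun_sub
          intro e he h1
          have hb := mem_bun.1 he
          rcases hall e hb.1 with rfl | rfl | rfl | rfl | rfl | rfl <;> grind
      · left
        intro e he h1
        rcases hall e he with rfl | rfl | rfl | rfl | rfl | rfl <;> grind
  · obtain ⟨σ, hσ⟩ : ∃ σ : Sym2 V → V, σ = fun e =>
      if e = s(a, b) ∨ e = s(b, c) ∨ e = s(b, d) then a else d := ⟨_, rfl⟩
    have s1 : σ s(a, b) = a := by simp [hσ]
    have s2 : σ s(a, c) = d := by simp only [hσ, n2.symm, n11, n12]; simp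
    have s3 : σ s(b, c) = a := by simp [hσ]
    have s4 : σ s(c, d) = d := by simp only [hσ, n1.symm, n8, n9]; simp
    have s5 : σ s(a, d) = d := by simp only [hσ, n3.symm, n13, n14]; simp
    have s6 : σ s(b, d) = a := by simp [hσ]
    clear hσ
    refine criterion hv σ ?_ ?_
    · intro e he i hi
      rcases hall e he with rfl | rfl | rfl | rfl | rfl | rfl
      · rw [s1]; exact (gab a).2 (Or.inl rfl)
      · rw [s4]; exact (gcd d).2 (Or.inr rfl)
      · exact absurd hi (gac i)
      · exact absurd hi (gad i)
      · exact absurd hi (gbc i)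
      · exact absurd hi (gbd i)
    · intro i
      by_cases hia : i = a
      · subst hia
        right; left
        apply no_envy hv
        · apply own_nonneg hv
          intro e he h1
          rcases hall e he with rfl | rfl | rfl | rfl | rfl | rfl
          · exact cab
          · grind
          · grind
          · grind
          · exact nd _ _ he (by simp; tauto)
          · exact nd _ _ he (by simp; tauto)
        · intro e he h1
          rcases hall e he with rfl | rfl | rfl | rfl | rfl | rfl <;> grind
      by_cases hid : i = d
      · subst hid
        right; left
        apply no_envy hv
        · refine hd.trans ?_
          apply val_up_s11 (hv.2.1 i) _ bun_sub
          · intro e he h1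
            have hb := mem_bun.1 he
            rcases hall e hb.1 with rfl | rfl | rfl | rfl | rfl | rfl
            · grind
            · simp at h1
            · exact nd _ _ hb.1 (by simp; tauto)
            · simp at h1
            · grind
            · grind
          · intro e he
            simp only [Finset.mem_insert, Finset.mem_singleton] at he
            rcases he with rfl | rfl
            · exact mem_bun.2 ⟨mcd, s4⟩
            · exact mem_bun.2 ⟨mad, s5⟩
        · intro e he h1
          rcases hall e he with rfl | rfl | rfl | rfl | rfl | rfl <;> grind
      · left
        intro e he h1
        rcases hall e he with rfl | rfl | rfl | rfl | rfl | rfl <;> grind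

end Helpers

/-- For every mixed instance on a simple graph, an EFX⁺₀ allocation
always exists. -/
theorem stmt11 {V : Type*} [Fintype V] [DecidableEq V]
    (M : Finset (Sym2 V)) (v : V → Finset (Sym2 V) → ℝ)
    (hvalid : ValidInstance M v) :
    ∃ X : V → Finset (Sym2 V),
      IsAllocation M X ∧ CondEnviedStrict v X ∧ CondOwnWeak v X := by
  classical
  by_contra hno
  have hf : ∀ i : V, ∃ o : Option (Sym2 V), (∀ e, o = some e → e ∈ M ∧ IsGoodFor (v i) M e ∧
      ∀ e' ∈ M, IsGoodFor (v i) M e' → v i {e'} ≤ v i {e}) ∧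
      (o = none → ∀ e ∈ M, ¬ IsGoodFor (v i) M e) := by
    intro i
    by_cases hne : (M.filter (fun e => IsGoodFor (v i) M e)).Nonempty
    · obtain ⟨e, he, hmax⟩ := Finset.exists_max_image _ (fun e => v i {e}) hne
      rw [Finset.mem_filter] at he
      refine ⟨some e, ?_, by simp⟩
      intro e1 h1
      cases h1
      exact ⟨he.1, he.2, fun e' h1 h2 => hmax e' (Finset.mem_filter.2 ⟨h1, h2⟩)⟩
    · refine ⟨none, by simp, fun _ e he hg => hne ⟨e, Finset.mem_filter.2 ⟨he, hg⟩⟩⟩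
  choose f hf1 hf2 using hf
  -- every independent set is blocked by a bad edge
  have hblock : ∀ S : Set V, (∀ i ∈ S, ∀ j ∈ S, ∀ e, f i = some e → f j = some e → i = j) →
      ∃ e ∈ M, (∀ i, ¬ IsGoodFor (v i) M e) ∧ ∀ k ∈ S, k ∈ e := by
    intro S hS
    by_contra hcon
    push Not at hcon
    refine hno (case_big hvalid f hf1 hf2 S hS ?_)
    intro e he hb
    obtain ⟨k, hk, hke⟩ := hcon e he hb
    exact ⟨k, hk, hvalid.2.2 k e he hke⟩
  let conf : V → V → Prop := fun i j => ∃ e, f i = some e ∧ f j = some e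
  have hconf : ∀ i j, i ≠ j → conf i j → f i = some s(i, j) ∧ f j = some s(i, j) := by
    rintro i j hij ⟨e, h1, h2⟩
    have hi := hf1 i e h1
    have hj := hf1 j e h2
    have := (Sym2.mem_and_mem_iff hij).1
      ⟨good_mem hvalid hi.1 hi.2.1, good_mem hvalid hj.1 hj.2.1⟩
    subst this
    exact ⟨h1, h2⟩
  have hcg : ∀ i j, i ≠ j → conf i j → s(i, j) ∈ M ∧
      ∀ k, IsGoodFor (v k) M s(i, j) ↔ k = i ∨ k = j := by
    intro i j hij hc
    obtain ⟨h1, h2⟩ := hconf i j hij hc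
    have h1 := hf1 i _ h1
    have h2 := hf1 j _ h2
    refine ⟨h1.1, fun k => ⟨fun h => by simpa using good_mem hvalid h1.1 h, ?_⟩⟩
    rintro (rfl | rfl)
    · exact h1.2.1
    · exact h2.2.1
  have hnc : ∀ i j, i ≠ j → ¬ conf i j → s(i, j) ∈ M ∧ ∀ k, ¬ IsGoodFor (v k) M s(i, j) := by
    intro i j hij hc
    obtain ⟨e, he, hb, hin⟩ := hblock {i, j} (by
      intro x hx y hy e h1 h2
      simp only [Set.mem_insert_iff, Set.mem_singleton_iff] at hx hy
      rcases hx with rfl | rfl <;> rcases hy with rfl | rfl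
      · rfl
      · exact absurd ⟨e, h1, h2⟩ hc
      · exact absurd ⟨e, h2, h1⟩ hc
      · rfl)
    have := (Sym2.mem_and_mem_iff hij).1 ⟨hin i (by simp), hin j (by simp)⟩
    subst this
    exact ⟨he, hb⟩
  have hsymm : ∀ i j, conf i j → conf j i := fun i j ⟨e, h1, h2⟩ => ⟨e, h2, h1⟩
  have huniq : ∀ i j k, i ≠ j → i ≠ k → conf i j → conf i k → j = k := by
    intro i j k hij hik h1 h2
    have h1 := (hconf i j hij h1).1
    have h2 := (hconf i k hik h2).1
    rw [h1] at h2
    have := Option.some.inj h2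
    rcases Sym2.eq_iff.1 this with h | h
    · exact h.2
    · exact absurd h.1 hik
  obtain ⟨e0, he0, hb0, -⟩ := hblock ∅ (by simp)
  induction e0 using Sym2.ind with
  | _ a c =>
  have hac : a ≠ c := by
    have := hvalid.1 _ he0
    simpa using this
  have hacn : ¬ conf a c := fun h => hb0 a (((hcg a c hac h).2 a).2 (Or.inl rfl))
  have hthree : ∀ z, z ≠ a → z ≠ c → conf a z ∨ conf c z := by
    intro z hza hzc
    by_contra hcon
    push Not at hcon
    obtain ⟨h1, h2⟩ := hcon
    obtain ⟨e, he, hb, hin⟩ := hblock {a, c, z} (by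
      intro x hx y hy e g1 g2
      simp only [Set.mem_insert_iff, Set.mem_singleton_iff] at hx hy
      rcases hx with rfl | rfl | rfl <;> rcases hy with rfl | rfl | rfl
      · rfl
      · exact absurd ⟨e, g1, g2⟩ hacn
      · exact absurd ⟨e, g1, g2⟩ h1
      · exact absurd ⟨e, g2, g1⟩ hacn
      · rfl
      · exact absurd ⟨e, g1, g2⟩ h2
      · exact absurd ⟨e, g2, g1⟩ h1
      · exact absurd ⟨e, g2, g1⟩ h2
      · rfl)
    have := (Sym2.mem_and_mem_iff hac).1 ⟨hin a (by simp), hin c (by simp)⟩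
    subst this
    have := hin z (by simp)
    simp at this
    tauto
  -- the situation with no partner of `c`
  have hsmall : ∀ a c : V, a ≠ c → ¬ conf a c →
      (∀ z, z ≠ a → z ≠ c → conf a z) → False := by
    intro a c hac hn hz
    obtain ⟨hm, hb⟩ := hnc a c hac hn
    refine hno (case_small hvalid a c hac hm hb ?_)
    have key : ∀ x y, x ≠ y → s(x, y) ∈ M → s(x, y) ≠ s(a, c) → x = a ∨ x = c ∨ y = a ∨ y = c := by
      intro x y hxy _ _
      by_contra hcon
      push Not at hcon
      obtain ⟨h1, h2, h3, h4⟩ := hcon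
      exact hxy (huniq a x y h1.symm h3.symm (hz x h1 h2) (hz y h3 h4))
    -- edges at `a`
    have ka : ∀ y, y ≠ a → y ≠ c → ¬ IsGoodFor (v c) M s(a, y) ∧ ¬ IsChoreFor (v a) M s(a, y) ∧
        ∀ i, IsGoodFor (v i) M s(a, y) → IsGoodFor (v a) M s(a, y) := by
      intro y hya hyc
      obtain ⟨h1, h2⟩ := hcg a y hya.symm (hz y hya hyc)
      have hga := (h2 a).2 (Or.inl rfl)
      refine ⟨fun h => ?_, good_not_chore hga, fun _ _ => hga⟩
      rcases (h2 c).1 h with h | h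
      · exact hac h.symm
      · exact hyc h.symm
    have kc : ∀ y, y ≠ a → y ≠ c → ¬ IsGoodFor (v c) M s(c, y) ∧ ¬ IsChoreFor (v a) M s(c, y) ∧
        ∀ i, IsGoodFor (v i) M s(c, y) → IsGoodFor (v a) M s(c, y) := by
      intro y hya hyc
      have hcy : ¬ conf c y := fun h =>
        hac (huniq y a c hya hyc (hsymm _ _ (hz y hya hyc)) (hsymm _ _ h))
      obtain ⟨h1, h2⟩ := hnc c y hyc.symm hcy
      refine ⟨h2 c, dummy_not_chore (hvalid.2.2 a _ h1 ?_), fun i hi => absurd hi (h2 i)⟩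
      simp only [Sym2.mem_iff, not_or]
      exact ⟨hac, hya.symm⟩
    intro e he hne
    induction e using Sym2.ind with
    | _ x y =>
    have hxy : x ≠ y := by simpa using hvalid.1 _ he
    rcases key x y hxy he hne with rfl | rfl | rfl | rfl
    · exact ka y hxy.symm (by rintro rfl; exact hne rfl)
    · exact kc y (by rintro rfl; exact hne Sym2.eq_swap) hxy.symm
    · rw [Sym2.eq_swap]
      exact ka x hxy (by rintro rfl; exact hne Sym2.eq_swap)
    · rw [Sym2.eq_swap]
      exact kc x (by rintro rfl; exact hne rfl) hxy
  by_cases hb : ∃ b, b ≠ a ∧ b ≠ c ∧ conf a b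
  swap
  · push Not at hb
    refine hsmall c a hac.symm (fun h => hacn (hsymm _ _ h)) ?_
    intro z hzc hza
    exact (hthree z hza hzc).resolve_left (hb z hza hzc)
  by_cases hd : ∃ d, d ≠ a ∧ d ≠ c ∧ conf c d
  swap
  · push Not at hd
    refine hsmall a c hac hacn ?_
    intro z hza hzc
    exact (hthree z hza hzc).resolve_right (hd z hza hzc)
  obtain ⟨b, hba, hbc, hab⟩ := hb
  obtain ⟨d, hda, hdc, hcd⟩ := hd
  have hbd : b ≠ d := by
    rintro rfl
    exact hac (huniq b a c hba hbc (hsymm _ _ hab) (hsymm _ _ hcd))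
  have h_ad : ¬ conf a d := fun h => hbd (huniq a b d hba.symm hda.symm hab h)
  have h_bc : ¬ conf b c := fun h => hac (huniq b a c hba hbc (hsymm _ _ hab) h)
  have h_bd : ¬ conf b d := fun h => hda (huniq b a d hba hbd (hsymm _ _ hab) h).symm
  have hV : ∀ z, z = a ∨ z = b ∨ z = c ∨ z = d := by
    intro z
    by_contra hcon
    push Not at hcon
    obtain ⟨h1, h2, h3, h4⟩ := hcon
    rcases hthree z h1 h3 with h | h
    · exact h2 (huniq a z b h1.symm hba.symm h hab)
    · exact h4 (huniq c z d h3.symm hdc.symm h hcd)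
  obtain ⟨m1, g1⟩ := hcg a b hba.symm hab
  obtain ⟨m2, g2⟩ := hcg c d hdc.symm hcd
  obtain ⟨m3, g3⟩ := hnc a c hac hacn
  obtain ⟨m4, g4⟩ := hnc a d hda.symm h_ad
  obtain ⟨m5, g5⟩ := hnc b c hbc h_bc
  obtain ⟨m6, g6⟩ := hnc b d hbd h_bd
  refine hno (case_four hvalid a b c d hba.symm hac hda.symm hbc hbd hdc.symm ?_
    m1 m2 m3 m4 m5 m6 g1 g2 g3 g4 g5 g6)
  intro e he
  induction e using Sym2.ind with
  | _ x y =>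
  have hxy : x ≠ y := by simpa using hvalid.1 _ he
  rcases hV x with rfl | rfl | rfl | rfl <;> rcases hV y with rfl | rfl | rfl | rfl <;>
    first | exact absurd rfl hxy | simp
end
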